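/- The minimum number of vertices of a finite planar k-regular simple graph of girth g equals 4 when (k,g)=(3,3), 8 when (k,g)=(3,4), 20 when (k,g)=(3,5), 6 when (k,g)=(4,3), and 12 when (k,g)=(5,3); these minima are attained by the graphs of the tetrahedron, the cube, the dodecahedron, the octahedron and the icosahedron, respectively. -/

import Mathlib

open SimpleGraph

/-- `H` is a minor of `G`: there is an assignment of pairwise disjoint connected
branch sets in `G` to the vertices of `H`, with an edge of `G` between the branch
sets of any two adjacent vertices of `H`. -/
def SimpleGraph.IsMinorOf {W V : Type*} (H : SimpleGraph W) (G : SimpleGraph V) : Prop :=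
  ∃ f : W → Set V,
    (∀ w, (G.induce (f w)).Connected) ∧
    (Pairwise fun w₁ w₂ => Disjoint (f w₁) (f w₂)) ∧
    ∀ ⦃w₁ w₂⦄, H.Adj w₁ w₂ → ∃ v₁ ∈ f w₁, ∃ v₂ ∈ f w₂, G.Adj v₁ v₂

/-- A graph is planar iff it has no `K₅` minor and no `K₃,₃` minor (Wagner's theorem). -/
def SimpleGraph.IsPlanar {V : Type*} (G : SimpleGraph V) : Prop :=
  ¬ (completeGraph (Fin 5)).IsMinorOf G ∧
    ¬ (completeBipartiteGraph (Fin 3) (Fin 3)).IsMinorOf G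

/-- A graph is outerplanar iff it has no `K₄` minor and no `K₂,₃` minor. -/
def SimpleGraph.IsOuterplanar {V : Type*} (G : SimpleGraph V) : Prop :=
  ¬ (completeGraph (Fin 4)).IsMinorOf G ∧
    ¬ (completeBipartiteGraph (Fin 2) (Fin 3)).IsMinorOf G

/-- The degree of a vertex, as the cardinality of its neighbour set. -/
noncomputable def SimpleGraph.degN {V : Type*} (G : SimpleGraph V) (v : V) : ℕ :=
  (G.neighborSet v).ncard

/-- An `({r,m};g)`-graph: girth `g`, every vertex has degree `r` or `m`, both occur. -/
def IsBigirthGraph {V : Type*} (G : SimpleGraph V) (r m g : ℕ) : Prop :=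
  G.girth = g ∧ (∀ v, G.degN v = r ∨ G.degN v = m) ∧
    (∃ v, G.degN v = r) ∧ (∃ v, G.degN v = m)

/-- The set of orders of finite planar `({r,m};g)`-graphs. -/
def bicageOrders (r m g : ℕ) : Set ℕ :=
  {n | ∃ (V : Type) (_ : Fintype V) (G : SimpleGraph V),
    G.IsPlanar ∧ IsBigirthGraph G r m g ∧ Fintype.card V = n}

/-- The set of orders of finite planar `k`-regular graphs of girth `g`. -/
def regOrders (k g : ℕ) : Set ℕ :=
  {n | ∃ (V : Type) (_ : Fintype V) (G : SimpleGraph V),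
    G.IsPlanar ∧ (∀ v, G.degN v = k) ∧ G.girth = g ∧ Fintype.card V = n}

/-- The tetrahedron graph `K₄`. -/
def tetrahedron : SimpleGraph (Fin 4) := completeGraph (Fin 4)

/-- The cube graph `Q₃` on `Fin 8`: vertices adjacent iff they differ in one bit. -/
def cubeGraph : SimpleGraph (Fin 8) :=
  SimpleGraph.fromRel (fun a b =>
    b.val = a.val ^^^ 1 ∨ b.val = a.val ^^^ 2 ∨ b.val = a.val ^^^ 4)

/-- The octahedron graph `K₂,₂,₂`, with parts `{i, i+3}`. -/
def octahedron : SimpleGraph (Fin 6) :=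
  SimpleGraph.fromRel (fun a b => a.val % 3 ≠ b.val % 3)

/-- The dodecahedron graph, as the generalized Petersen graph `GP(10,2)`. -/
def dodecahedron : SimpleGraph (Fin 20) :=
  SimpleGraph.fromRel (fun a b =>
    (a.val < 10 ∧ b.val < 10 ∧ b.val = (a.val + 1) % 10) ∨
    (a.val < 10 ∧ b.val = a.val + 10) ∨
    (10 ≤ a.val ∧ 10 ≤ b.val ∧ b.val = 10 + ((a.val - 10 + 2) % 10)))

/-- The icosahedron graph, as a gyroelongated pentagonal bipyramid: apexes `0` and `11`,
upper pentagon `1..5`, lower pentagon `6..10`. -/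
def icosahedron : SimpleGraph (Fin 12) :=
  SimpleGraph.fromRel (fun a b =>
    (a.val = 0 ∧ 1 ≤ b.val ∧ b.val ≤ 5) ∨
    (a.val = 11 ∧ 6 ≤ b.val ∧ b.val ≤ 10) ∨
    (1 ≤ a.val ∧ a.val ≤ 5 ∧ b.val = 1 + a.val % 5) ∨
    (6 ≤ a.val ∧ a.val ≤ 10 ∧ b.val = 6 + (a.val - 6 + 1) % 5) ∨
    (1 ≤ a.val ∧ a.val ≤ 5 ∧ b.val = a.val + 5) ∨
    (1 ≤ a.val ∧ a.val ≤ 5 ∧ b.val = 6 + a.val % 5))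

/-!
A planar 3-connected graph behaves as if it had faces: the vertex sets of its peripheral (induced,
non-separating) cycles. By Tutte's argument these cycles span the cycle space over `ZMod 2`, and in
the absence of `K₅` and `K₃,₃` minors every edge lies on exactly two of them. As each face has at
least `g` edges, a planar 3-connected graph of girth `g` with `n` vertices and `m` edges satisfies
`g (m + 2) ≤ 2 m + g n`. A planar `k`-regular graph of order below the claimed minimum is
3-connected, since each side of a separator with at most two vertices has to accommodate the
neighbourhood of one of its vertices, and it violates this inequality.

Conversely, if a family of even subgraphs spans the cycle space and covers every edge exactly twice,
the graph is planar: this property (MacLane's) passes to minors and fails for `K₅` and `K₃,₃` by the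
same inequality. The faces of the solids provide such a family.
-/

section Connectivity

variable {V : Type*} {G : SimpleGraph V} {A B K P Q S X : Set V}

/-- Two vertex sets touch when some edge has one end in each of them. -/
def Touches (G : SimpleGraph V) (A B : Set V) : Prop :=
  ∃ a ∈ A, ∃ b ∈ B, G.Adj a b

theorem Touches.symm (h : Touches G A B) : Touches G B A :=
  let ⟨a, ha, b, hb, hab⟩ := h
  ⟨b, hb, a, ha, hab.symm⟩

theorem Touches.mono {A' B' : Set V} (h : Touches G A B) (hA : A ⊆ A') (hB : B ⊆ B') :
    Touches G A' B' :=
  let ⟨a, ha, b, hb, hab⟩ := h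
  ⟨a, hA ha, b, hB hb, hab⟩

theorem touches_singleton_right {b : V} : Touches G A {b} ↔ ∃ a ∈ A, G.Adj a b := by
  simp [Touches]

/-- `K` is the vertex set of a connected component of the subgraph induced on `S`. -/
structure IsComponentOf (G : SimpleGraph V) (K S : Set V) : Prop where
  subset : K ⊆ S
  connected : (G.induce K).Connected
  mem_of_adj : ∀ a ∈ K, ∀ b ∈ S, G.Adj a b → b ∈ K

theorem nonempty_of_connected_induce (hS : (G.induce S).Connected) : S.Nonempty :=
  Set.nonempty_coe_sort.mp hS.nonempty

theorem eq_of_forall_adj_mem (hS : (G.induce S).Connected) (hXS : X ⊆ S) (hX : X.Nonempty)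
    (hclosed : ∀ a ∈ X, ∀ b ∈ S, G.Adj a b → b ∈ X) : X = S := by
  obtain ⟨x, hx⟩ := hX
  refine hXS.antisymm fun y hy => ?_
  obtain ⟨w⟩ := hS.preconnected ⟨x, hXS hx⟩ ⟨y, hy⟩
  have walk_mem : ∀ {u v : S}, (G.induce S).Walk u v → (u : V) ∈ X → (v : V) ∈ X := by
    intro u v w
    induction w with
    | nil => exact id
    | cons hadj _ ih => exact fun hu => ih (hclosed _ hu _ (Subtype.coe_prop _) hadj)
  exact walk_mem w hx

theorem touches_sdiff (hS : (G.induce S).Connected) (hXS : X ⊆ S) (hX : X.Nonempty)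
    (hne : (S \ X).Nonempty) : Touches G X (S \ X) := by
  by_contra hj
  obtain ⟨y, hyS, hyX⟩ := hne
  refine hyX (eq_of_forall_adj_mem hS hXS hX (fun a ha b hb hab => ?_) ▸ hyS)
  by_contra hbX
  exact hj ⟨a, ha, b, ⟨hb, hbX⟩, hab⟩

theorem connected_induce_singleton (v : V) : (G.induce {v}).Connected := by
  simp

theorem Touches.connected_union (hA : (G.induce A).Connected) (hB : (G.induce B).Connected)
    (h : Touches G A B) : (G.induce (A ∪ B)).Connected :=
  let ⟨_, ha, _, hb, hab⟩ := h
  connected_induce_union hA.preconnected hB.preconnected ha hb hab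

theorem exists_isComponentOf {p : V} (hp : p ∈ S) : ∃ K, IsComponentOf G K S ∧ p ∈ K := by
  let F : Set (Set V) := {T | T ⊆ S ∧ p ∈ T ∧ (G.induce T).Connected}
  have hF : (G.induce (⋃₀ F)).Connected :=
    induce_sUnion_connected_of_pairwise_not_disjoint
      ⟨{p}, Set.singleton_subset_iff.mpr hp, rfl, connected_induce_singleton p⟩
      (fun hs ht => ⟨p, hs.2.1, ht.2.1⟩) (fun hs => hs.2.2)
  have hFS : ⋃₀ F ⊆ S := Set.sUnion_subset fun T hT => hT.1
  have hpF : p ∈ ⋃₀ F :=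
    ⟨{p}, ⟨Set.singleton_subset_iff.mpr hp, rfl, connected_induce_singleton p⟩, rfl⟩
  refine ⟨⋃₀ F, ⟨hFS, hF, fun a ha b hb hab => ?_⟩, hpF⟩
  have hFb : (G.induce (⋃₀ F ∪ {b})).Connected :=
    Touches.connected_union hF (connected_induce_singleton b) ⟨a, ha, b, rfl, hab⟩
  exact ⟨⋃₀ F ∪ {b}, ⟨Set.union_subset hFS (Set.singleton_subset_iff.mpr hb), Or.inl hpF, hFb⟩,
    Or.inr rfl⟩

theorem IsComponentOf.subset_of_connected (hK : IsComponentOf G K S)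
    (hA : (G.induce A).Connected) (hAS : A ⊆ S) (hne : (A ∩ K).Nonempty) : A ⊆ K :=
  Set.inter_eq_left.mp <| eq_of_forall_adj_mem hA Set.inter_subset_left hne fun a ha b hb hab =>
    ⟨hb, hK.mem_of_adj a ha.2 b (hAS hb) hab⟩

theorem IsComponentOf.eq_or_disjoint {K' : Set V} (hK : IsComponentOf G K S)
    (hK' : IsComponentOf G K' S) : K = K' ∨ Disjoint K K' := by
  refine or_iff_not_imp_right.mpr fun h => ?_
  have hne := Set.not_disjoint_iff_nonempty_inter.mp h
  exact (hK'.subset_of_connected hK.connected hK.subset hne).antisymm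
    (hK.subset_of_connected hK'.connected hK'.subset (Set.inter_comm K K' ▸ hne))

theorem connected_induce_of_forall_isComponentOf_mem {p : V} (hp : p ∈ S)
    (h : ∀ K, IsComponentOf G K S → p ∈ K) : (G.induce S).Connected := by
  obtain ⟨K, hK, hpK⟩ := exists_isComponentOf (G := G) hp
  suffices K = S from this ▸ hK.connected
  refine hK.subset.antisymm fun v hv => ?_
  obtain ⟨K', hK', hvK'⟩ := exists_isComponentOf (G := G) hv
  rcases hK.eq_or_disjoint hK' with rfl | hdisj
  · exact hvK'
  · exact (Set.disjoint_left.mp hdisj hpK (h K' hK')).elim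

theorem IsComponentOf.touches_of_sdiff (hS : (G.induce S).Connected) (hX : (S ∩ X).Nonempty)
    (hK : IsComponentOf G K (S \ X)) : Touches G K (S ∩ X) := by
  have hKS : K ⊆ S := hK.subset.trans Set.sdiff_subset
  obtain ⟨x, hxS, hxX⟩ := hX
  obtain ⟨a, ha, b, ⟨hbS, hbK⟩, hab⟩ := touches_sdiff hS hKS
    (nonempty_of_connected_induce hK.connected) ⟨x, hxS, fun hxK => (hK.subset hxK).2 hxX⟩
  refine ⟨a, ha, b, ⟨hbS, ?_⟩, hab⟩
  by_contra hbX
  exact hbK (hK.mem_of_adj a ha b ⟨hbS, hbX⟩ hab)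

theorem exists_isComponentOf_touches_touches (hS : (G.induce S).Connected) (hP : P.Nonempty)
    (hQ : Q.Nonempty) (hPS : P ⊆ S) (hQS : Q ⊆ S) (hPQ : Disjoint P Q) (hno : ¬ Touches G P Q) :
    ∃ K, IsComponentOf G K (S \ (P ∪ Q)) ∧ Touches G K P ∧ Touches G K Q := by
  by_contra! hcon
  let X := P ∪ {m | ∃ K, IsComponentOf G K (S \ (P ∪ Q)) ∧ Touches G K P ∧ m ∈ K}
  have hXS : X ⊆ S := Set.union_subset hPS fun m ⟨K, hK, _, hm⟩ => (hK.subset hm).1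
  have hX : X = S := by
    refine eq_of_forall_adj_mem hS hXS (hP.mono Set.subset_union_left) fun a ha b hb hab => ?_
    by_cases hbP : b ∈ P
    · exact Or.inl hbP
    rcases ha with haP | ⟨K, hK, hKP, haK⟩
    · have hbQ : b ∉ Q := fun hbQ => hno ⟨a, haP, b, hbQ, hab⟩
      obtain ⟨K, hK, hbK⟩ := exists_isComponentOf (G := G)
        (show b ∈ S \ (P ∪ Q) from ⟨hb, fun h => h.elim hbP hbQ⟩)
      exact Or.inr ⟨K, hK, ⟨b, hbK, a, haP, hab.symm⟩, hbK⟩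
    · have hbQ : b ∉ Q := fun hbQ => hcon K hK hKP ⟨a, haK, b, hbQ, hab⟩
      exact Or.inr ⟨K, hK, hKP, hK.mem_of_adj a haK b ⟨hb, fun h => h.elim hbP hbQ⟩ hab⟩
  obtain ⟨q, hq⟩ := hQ
  rcases (hX ▸ hQS hq : q ∈ X) with hqP | ⟨K, hK, -, hqK⟩
  · exact Set.disjoint_left.mp hPQ hqP hq
  · exact (hK.subset hqK).2 (Or.inr hq)

end Connectivity

section CycleSpace

variable {V : Type*} {G : SimpleGraph V} {S T U : Set V} {z : Sym2 V → ZMod 2}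

theorem zmod_two_eq_one_of_ne_zero {x : ZMod 2} (hx : x ≠ 0) : x = 1 := by
  revert x; decide

theorem zmod_two_fun_add_self {ι : Type*} (f : ι → ZMod 2) : f + f = 0 :=
  funext fun i => CharTwo.add_self_eq_zero (f i)

/-- The mod-2 edge chains of the subgraph of `G` induced on `U`, extended by zero. -/
def chainSpace (G : SimpleGraph V) (U : Set V) : Submodule (ZMod 2) (Sym2 V → ZMod 2) where
  carrier := {z | ∀ ⦃a b⦄, z s(a, b) ≠ 0 → G.Adj a b ∧ a ∈ U ∧ b ∈ U}
  zero_mem' := fun _ _ h => (h rfl).elim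
  add_mem' := fun {x y} hx hy a b h => by
    by_cases hxab : x s(a, b) = 0
    · exact hy fun hyab => h (by simp [hxab, hyab])
    · exact hx hxab
  smul_mem' := fun c _ hx _ _ h => hx (right_ne_zero_of_mul h)

theorem chainSpace_mono (h : S ⊆ T) : chainSpace G S ≤ chainSpace G T := fun _ hz _ _ hab =>
  let ⟨hadj, ha, hb⟩ := hz hab
  ⟨hadj, h ha, h hb⟩

theorem apply_eq_zero_of_notMem_edgeSet (hz : z ∈ chainSpace G U) {e : Sym2 V}
    (he : e ∉ G.edgeSet) : z e = 0 := by
  induction e with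
  | h a b => exact not_not.mp fun hab => he (hz hab).1

theorem apply_eq_zero_of_notMem (hz : z ∈ chainSpace G U) {a : V} (h : a ∉ U) (b : V) :
    z s(a, b) = 0 :=
  not_not.mp fun hab => h (hz hab).2.1

theorem single_mem_chainSpace [DecidableEq V] {a b : V} (hab : G.Adj a b) (ha : a ∈ U)
    (hb : b ∈ U) :
    (Pi.single s(a, b) 1 : Sym2 V → ZMod 2) ∈ chainSpace G U := by
  intro c d hcd
  rcases Sym2.eq_iff.mp (not_not.mp fun h => hcd (Pi.single_eq_of_ne h 1)) with
    ⟨rfl, rfl⟩ | ⟨rfl, rfl⟩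
  · exact ⟨hab, ha, hb⟩
  · exact ⟨hab.symm, hb, ha⟩

theorem sum_sum_apply_self_eq_zero (hz : z ∈ chainSpace G U) (X : Finset V) :
    ∑ v ∈ X, ∑ u ∈ X, z s(v, u) = 0 := by
  rw [← Finset.sum_product']
  refine Finset.sum_involution (fun p _ => p.swap) (fun p _ => ?_) (fun p _ hp hswap => ?_)
    (fun p hp => ?_) (fun _ _ => rfl)
  · rw [Prod.fst_swap, Prod.snd_swap, Sym2.eq_swap]
    exact CharTwo.add_self_eq_zero _
  · exact (hz hp).1.ne (congrArg Prod.snd hswap)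
  · simpa [and_comm] using hp

theorem finrank_chainSpace_univ [Finite V] :
    Module.finrank (ZMod 2) (chainSpace G Set.univ) = G.edgeSet.ncard := by
  cases nonempty_fintype V
  classical
  let ext : (G.edgeSet → ZMod 2) →ₗ[ZMod 2] (Sym2 V → ZMod 2) :=
    Function.ExtendByZero.linearMap (ZMod 2) Subtype.val
  have hinj : Function.Injective ext := fun x y h => funext fun e => by
    simpa [ext, Subtype.val_injective.extend_apply] using congrFun h e
  have hrange : LinearMap.range ext = chainSpace G Set.univ := by
    refine le_antisymm ?_ fun z hz => ⟨fun e => z e, funext fun e => ?_⟩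
    · rintro _ ⟨x, rfl⟩ a b hab
      by_contra hadj
      exact hab (Function.extend_apply' _ _ _ fun ⟨e, he⟩ =>
        hadj ⟨G.mem_edgeSet.mp (he ▸ e.2), trivial, trivial⟩)
    · by_cases he : e ∈ G.edgeSet
      · exact Subtype.val_injective.extend_apply (fun e : G.edgeSet => z e) 0 ⟨e, he⟩
      · rw [Function.ExtendByZero.linearMap_apply, Function.extend_apply']
        · exact (apply_eq_zero_of_notMem_edgeSet hz he).symm
        · rintro ⟨e, rfl⟩
          exact he e.2
  rw [← hrange, LinearMap.finrank_range_of_inj hinj, Module.finrank_fintype_fun_eq_card,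
    ← Nat.card_eq_fintype_card, Nat.card_coe_set_eq]

variable [Fintype V]

/-- The boundary map sending an edge to the sum of its two ends. -/
def boundary : (Sym2 V → ZMod 2) →ₗ[ZMod 2] (V → ZMod 2) where
  toFun z v := ∑ w, z s(v, w)
  map_add' x y := by ext v; simp [Finset.sum_add_distrib]
  map_smul' c x := by ext v; simp [Finset.mul_sum]

theorem boundary_apply (z : Sym2 V → ZMod 2) (v : V) : boundary z v = ∑ w, z s(v, w) :=
  rfl

/-- The mod-2 cycle space of the subgraph of `G` induced on `U`. -/
def cycleSpace (G : SimpleGraph V) (U : Set V) : Submodule (ZMod 2) (Sym2 V → ZMod 2) :=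
  chainSpace G U ⊓ LinearMap.ker boundary

theorem cycleSpace_mono (h : S ⊆ T) : cycleSpace G S ≤ cycleSpace G T :=
  inf_le_inf_right _ (chainSpace_mono h)

theorem sum_boundary_eq_sum_cut [DecidableEq V] (hz : z ∈ chainSpace G U) (X : Finset V) :
    ∑ v ∈ X, boundary z v = ∑ v ∈ X, ∑ u ∈ Xᶜ, z s(v, u) := by
  simp only [boundary_apply, ← Finset.sum_add_sum_compl X]
  rw [Finset.sum_add_distrib, sum_sum_apply_self_eq_zero hz, zero_add]

theorem sum_boundary_eq_zero (hz : z ∈ chainSpace G U) : ∑ v, boundary z v = 0 := by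
  classical
  rw [sum_boundary_eq_sum_cut hz]
  simp

theorem sum_cut_eq_zero [DecidableEq V] (hz : z ∈ cycleSpace G U) (X : Finset V) :
    ∑ v ∈ X, ∑ u ∈ Xᶜ, z s(v, u) = 0 := by
  rw [← sum_boundary_eq_sum_cut hz.1, LinearMap.mem_ker.mp hz.2]
  simp

theorem apply_eq_zero_of_unique_cut_edge (hz : z ∈ cycleSpace G U) {X : Set V} {a b : V}
    (ha : a ∈ X) (hb : b ∉ X) (h : ∀ v ∈ X, ∀ u ∉ X, z s(v, u) ≠ 0 → v = a ∧ u = b) :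
    z s(a, b) = 0 := by
  classical
  have hcut := sum_cut_eq_zero hz X.toFinset
  rwa [Finset.sum_eq_single_of_mem a (by simpa using ha), Finset.sum_eq_single_of_mem b
    (by simpa using hb)] at hcut
  · intro u hu hub
    by_contra hne
    exact hub (h a ha u (by simpa using hu) hne).2
  · intro v hv hva
    refine Finset.sum_eq_zero fun u hu => ?_
    by_contra hne
    exact hva (h v (by simpa using hv) u (by simpa using hu) hne).1

theorem boundary_single [DecidableEq V] {a b : V} (hab : a ≠ b) :
    boundary (Pi.single s(a, b) 1) = Pi.single a 1 + Pi.single b 1 := by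
  ext v
  by_cases hva : v = a
  · subst hva
    simp [boundary_apply, Pi.single_apply, hab]
  by_cases hvb : v = b
  · subst hvb
    simp [boundary_apply, Pi.single_apply, hva]
  · simp [boundary_apply, hva, hvb]

theorem exists_chain_of_connected [DecidableEq V] (hS : (G.induce S).Connected) {u v : V}
    (hu : u ∈ S) (hv : v ∈ S) :
    ∃ z ∈ chainSpace G S, boundary z = Pi.single u 1 + Pi.single v 1 := by
  let X := {v ∈ S | ∃ z ∈ chainSpace G S, boundary z = Pi.single u 1 + Pi.single v 1}
  have hu' : u ∈ X := ⟨hu, 0, zero_mem _, by rw [map_zero, zmod_two_fun_add_self]⟩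
  have hX : X = S := by
    refine eq_of_forall_adj_mem hS (Set.sep_subset _ _) ⟨u, hu'⟩ ?_
    rintro a ⟨ha, z, hz, hza⟩ b hb hab
    refine ⟨hb, z + Pi.single s(a, b) 1, add_mem hz (single_mem_chainSpace hab ha hb), ?_⟩
    rw [map_add, hza, boundary_single hab.ne, ← add_assoc,
      add_assoc (Pi.single u 1), zmod_two_fun_add_self, add_zero]
  exact (hX ▸ hv : v ∈ X).2

theorem exists_chain_of_sum_eq_zero (hS : (G.induce S).Connected) {d : V → ZMod 2}
    (hd : ∀ v ∉ S, d v = 0) (hsum : ∑ v, d v = 0) :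
    ∃ z ∈ chainSpace G S, boundary z = d := by
  classical
  obtain ⟨u, hu⟩ := nonempty_of_connected_induce hS
  have hchain (v : V) : ∃ z ∈ chainSpace G S,
      boundary z = d v • (Pi.single u 1 + Pi.single v 1 : V → ZMod 2) := by
    by_cases hv : v ∈ S
    · obtain ⟨z, hz, hbz⟩ := exists_chain_of_connected hS hu hv
      exact ⟨d v • z, Submodule.smul_mem _ _ hz, by rw [map_smul, hbz]⟩
    · exact ⟨0, zero_mem _, by rw [hd v hv, map_zero, zero_smul]⟩
  choose c hc hbc using hchain
  refine ⟨∑ v, c v, sum_mem fun v _ => hc v, ?_⟩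
  simp only [map_sum, hbc, smul_add, Finset.sum_add_distrib, ← Finset.sum_smul, hsum, zero_smul,
    zero_add]
  ext w
  simp [Finset.sum_apply, Pi.single_apply]

theorem girth_le_card_support (hz : z ∈ cycleSpace G U) (hne : z ≠ 0) :
    G.girth ≤ Finset.card {e | z e ≠ 0} := by
  classical
  let H : SimpleGraph V := fromEdgeSet {e | z e ≠ 0}
  have adj_of_ne {a b : V} (hab : z s(a, b) ≠ 0) : H.Adj a b :=
    (fromEdgeSet_adj _).mpr ⟨hab, (hz.1 hab).1.ne⟩
  have hHG : H ≤ G := fun a b hab => (hz.1 ((fromEdgeSet_adj _).mp hab).1).1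
  have hcyclic : ¬ H.IsAcyclic := by
    intro hacyclic
    obtain ⟨⟨a, b⟩, hab⟩ := Function.ne_iff.mp hne
    have hbridge := isAcyclic_iff_forall_isBridge.mp hacyclic (e := s(a, b))
      (adj_of_ne hab)
    refine hab (apply_eq_zero_of_unique_cut_edge hz
      (X := {v | (H.deleteEdges {s(a, b)}).Reachable a v}) (Reachable.refl a)
      (isBridge_iff.mp hbridge) fun v hv u hu huv => ?_)
    have hedge : s(v, u) = s(a, b) := by
      by_contra hne'
      exact hu (Reachable.trans hv (Adj.reachable (deleteEdges_adj.mpr ⟨adj_of_ne huv, hne'⟩)))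
    rcases Sym2.eq_iff.mp hedge with h | ⟨-, rfl⟩
    · exact h
    · exact (hu (Reachable.refl u)).elim
  obtain ⟨a, c, hc⟩ : ∃ a, ∃ c : H.Walk a a, c.IsCycle := by
    simpa [IsAcyclic] using hcyclic
  have hsub : c.edges.toFinset ⊆ Finset.univ.filter (z · ≠ 0) := by
    intro e he
    have := c.edges_subset_edgeSet (List.mem_toFinset.mp he)
    exact Finset.mem_filter.mpr ⟨Finset.mem_univ e, ((edgeSet_fromEdgeSet _).le this).1⟩
  calc G.girth ≤ (c.mapLe hHG).length := girth_le_length (hc.mapLe hHG)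
    _ = c.edges.toFinset.card := by
        rw [List.toFinset_card_of_nodup hc.edges_nodup, Walk.length_edges]; simp [Walk.mapLe]
    _ ≤ _ := Finset.card_le_card hsub

theorem finrank_map_boundary_add_finrank_cycleSpace :
    Module.finrank (ZMod 2) ((chainSpace G U).map boundary) +
      Module.finrank (ZMod 2) (cycleSpace G U) = Module.finrank (ZMod 2) (chainSpace G U) := by
  rw [← LinearMap.finrank_range_add_finrank_ker (boundary.domRestrict (chainSpace G U)),
    LinearMap.range_domRestrict, LinearMap.ker_domRestrict, cycleSpace,
    ← Submodule.map_comap_subtype, Submodule.finrank_map_subtype_eq]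

/-- The functions on the vertices whose values sum to zero: the possible boundaries of chains. -/
def sumZeroSpace (V : Type*) [Fintype V] : Submodule (ZMod 2) (V → ZMod 2) :=
  LinearMap.ker (∑ v, LinearMap.proj v)

theorem mem_sumZeroSpace_iff {d : V → ZMod 2} : d ∈ sumZeroSpace V ↔ ∑ v, d v = 0 := by
  simp [sumZeroSpace]

theorem finrank_sumZeroSpace_add_one [Nonempty V] :
    Module.finrank (ZMod 2) (sumZeroSpace V) + 1 = Fintype.card V := by
  classical
  have hne : (∑ v, LinearMap.proj v : (V → ZMod 2) →ₗ[ZMod 2] ZMod 2) ≠ 0 := by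
    intro h
    have := congrArg (fun f => f (Pi.single (Classical.arbitrary V) 1)) h
    simp [LinearMap.sum_apply] at this
  rw [← Module.finrank_fintype_fun_eq_card (ZMod 2),
    ← Module.Dual.finrank_ker_add_one_of_ne_zero hne]
  rfl

theorem card_edgeSet_add_one_le_finrank_cycleSpace_add_card [Nonempty V] :
    G.edgeSet.ncard + 1 ≤ Module.finrank (ZMod 2) (cycleSpace G Set.univ) + Fintype.card V := by
  have hle : (chainSpace G Set.univ).map boundary ≤ sumZeroSpace V := by
    rintro _ ⟨z, hz, rfl⟩
    exact mem_sumZeroSpace_iff.mpr (sum_boundary_eq_zero hz)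
  have := Submodule.finrank_mono hle
  rw [← finrank_chainSpace_univ, ← finrank_map_boundary_add_finrank_cycleSpace,
    ← finrank_sumZeroSpace_add_one]
  lia

theorem finrank_cycleSpace_add_card (hG : G.Connected) :
    Module.finrank (ZMod 2) (cycleSpace G Set.univ) + Fintype.card V = G.edgeSet.ncard + 1 := by
  have := hG.nonempty
  have hle : sumZeroSpace V ≤ (chainSpace G Set.univ).map boundary := fun d hd =>
    exists_chain_of_sum_eq_zero (S := Set.univ) ((induceUnivIso G).connected_iff.mpr hG)
      (fun v hv => (hv trivial).elim) (mem_sumZeroSpace_iff.mp hd)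
  have := Submodule.finrank_mono hle
  have := card_edgeSet_add_one_le_finrank_cycleSpace_add_card (G := G)
  rw [← finrank_chainSpace_univ, ← finrank_map_boundary_add_finrank_cycleSpace,
    ← finrank_sumZeroSpace_add_one] at *
  lia

end CycleSpace

section FacialCover

variable {V W F : Type*} [Fintype V] [Fintype W] [Fintype F] {G G' : SimpleGraph V}
  {H : SimpleGraph W} {c : F → Sym2 V → ZMod 2}

/-- A MacLane basis of `G` together with the outer face: a family of elements of the cycle space
which spans it, sums to zero, and covers every edge at most twice. The facial cycles of a plane
graph form such a family. -/
structure IsFacialCover (G : SimpleGraph V) (c : F → Sym2 V → ZMod 2) : Prop where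
  mem_cycleSpace : ∀ f, c f ∈ cycleSpace G Set.univ
  le_span : cycleSpace G Set.univ ≤ Submodule.span (ZMod 2) (Set.range c)
  sum_eq_zero : ∑ f, c f = 0
  card_le_two : ∀ e, Finset.card {f | c f e ≠ 0} ≤ 2

namespace IsFacialCover

theorem cycleSpace_le_span_erase [DecidableEq F] (hc : IsFacialCover G c) (f₀ : F) :
    cycleSpace G Set.univ ≤
      Submodule.span (ZMod 2) (c '' ((Finset.univ.filter (c · ≠ 0)).erase f₀ : Set F)) := by
  have hmem {f : F} (hf : f ≠ f₀) : c f ∈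
      Submodule.span (ZMod 2) (c '' ((Finset.univ.filter (c · ≠ 0)).erase f₀ : Set F)) := by
    by_cases h0 : c f = 0
    · rw [h0]
      exact zero_mem _
    · exact Submodule.subset_span ⟨f, by simp [hf, h0], rfl⟩
  refine hc.le_span.trans (Submodule.span_le.mpr ?_)
  rintro _ ⟨f, rfl⟩
  by_cases hf : f = f₀
  · have hsum := hc.sum_eq_zero
    rw [← Finset.add_sum_erase _ _ (Finset.mem_univ f₀)] at hsum
    rw [hf, eq_neg_of_add_eq_zero_left hsum]
    exact neg_mem (sum_mem fun f hf => hmem (Finset.ne_of_mem_erase hf))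
  · exact hmem hf

theorem finrank_cycleSpace_lt (hc : IsFacialCover G c)
    (hne : (Finset.univ.filter (c · ≠ 0)).Nonempty) :
    Module.finrank (ZMod 2) (cycleSpace G Set.univ) < Finset.card {f | c f ≠ 0} := by
  classical
  obtain ⟨f₀, hf₀⟩ := hne
  have hle := hc.cycleSpace_le_span_erase f₀
  rw [← Finset.coe_image] at hle
  exact ((Submodule.finrank_mono hle).trans
    ((finrank_span_finset_le_card _).trans Finset.card_image_le)).trans_lt
    (Finset.card_erase_lt_of_mem hf₀)

theorem girth_mul_card_le (hc : IsFacialCover G c) :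
    G.girth * Finset.card {f | c f ≠ 0} ≤ 2 * G.edgeSet.ncard := by
  classical
  calc G.girth * Finset.card {f | c f ≠ 0}
      = ∑ f with c f ≠ 0, G.girth := by rw [Finset.sum_const, smul_eq_mul, mul_comm]
    _ ≤ ∑ f with c f ≠ 0, Finset.card {e | c f e ≠ 0} := Finset.sum_le_sum fun f hf =>
        girth_le_card_support (hc.mem_cycleSpace f) (Finset.mem_filter.mp hf).2
    _ ≤ ∑ f, Finset.card {e ∈ G.edgeFinset | c f e ≠ 0} := by
        refine (Finset.sum_le_sum_of_subset (Finset.subset_univ _)).trans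
          (Finset.sum_le_sum fun f _ => Finset.card_le_card fun e he => ?_)
        induction e with
        | h a b =>
          have hab := (Finset.mem_filter.mp he).2
          simpa [hab] using ((hc.mem_cycleSpace f).1 hab).1
    _ = ∑ e ∈ G.edgeFinset, Finset.card {f | c f e ≠ 0} :=
        Finset.sum_card_bipartiteAbove_eq_sum_card_bipartiteBelow fun f e => c f e ≠ 0
    _ ≤ ∑ e ∈ G.edgeFinset, 2 := Finset.sum_le_sum fun e _ => hc.card_le_two e
    _ = 2 * G.edgeSet.ncard := by
        rw [Finset.sum_const, smul_eq_mul, mul_comm, ← coe_edgeFinset, Set.ncard_coe_finset]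

theorem girth_mul_card_edgeSet_le (hc : IsFacialCover G c) :
    G.girth * (G.edgeSet.ncard + 2) ≤ 2 * G.edgeSet.ncard + G.girth * Fintype.card V := by
  classical
  rcases Nat.eq_zero_or_pos G.girth with h0 | hpos
  · simp [h0]
  obtain ⟨v, w, hw, hlen⟩ := exists_girth_eq_length.mpr (mt girth_eq_zero.mpr hpos.ne')
  have : Nonempty V := ⟨v⟩
  have hgirth : G.girth ≤ G.edgeSet.ncard := by
    rw [hlen, ← coe_edgeFinset, Set.ncard_coe_finset]
    exact hw.isTrail.length_le_card_edgeFinset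
  have hdim := card_edgeSet_add_one_le_finrank_cycleSpace_add_card (G := G)
  rcases (Finset.univ.filter (c · ≠ 0)).eq_empty_or_nonempty with hempty | hne
  · have hbot : cycleSpace G Set.univ = ⊥ := by
      refine le_bot_iff.mp (hc.le_span.trans (Submodule.span_le.mpr ?_))
      rintro _ ⟨f, rfl⟩
      simpa using Finset.filter_eq_empty_iff.mp hempty (Finset.mem_univ f)
    rw [hbot, finrank_bot, zero_add] at hdim
    nlinarith
  · have := hc.finrank_cycleSpace_lt hne
    have := hc.girth_mul_card_le
    nlinarith

/-- Two faces are merged in a subgraph when they are linked by a chain of faces such that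
consecutive faces share an edge that is not in the subgraph. -/
def mergeSetoid (c : F → Sym2 V → ZMod 2) (G' : SimpleGraph V) : Setoid F :=
  Relation.EqvGen.setoid fun f g => ∃ e ∉ G'.edgeSet, c f e ≠ 0 ∧ c g e ≠ 0

open Classical in
/-- The sum of the faces in a merged class. -/
noncomputable def mergedFace (c : F → Sym2 V → ZMod 2) (G' : SimpleGraph V)
    (κ : Quotient (mergeSetoid c G')) : Sym2 V → ZMod 2 :=
  ∑ f with ⟦f⟧ = κ, c f

open Classical in
theorem mergedFace_apply_eq_zero (hc : IsFacialCover G c) {e : Sym2 V} (he : e ∉ G'.edgeSet)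
    (κ : Quotient (mergeSetoid c G')) : mergedFace c G' κ e = 0 := by
  have hsum : ∑ f, c f e = 0 := by rw [← Finset.sum_apply, hc.sum_eq_zero, Pi.zero_apply]
  rw [mergedFace, Finset.sum_apply]
  by_cases h : ∃ f, ⟦f⟧ = κ ∧ c f e ≠ 0
  · obtain ⟨f, rfl, hf⟩ := h
    rw [← hsum]
    refine Finset.sum_subset (Finset.subset_univ _) fun g _ hg => ?_
    by_contra hge
    exact hg (Finset.mem_filter.mpr
      ⟨Finset.mem_univ g, Quotient.sound (Relation.EqvGen.rel g f ⟨e, he, hge, hf⟩)⟩)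
  · exact Finset.sum_eq_zero fun f hf =>
      not_not.mp fun hfe => h ⟨f, (Finset.mem_filter.mp hf).2, hfe⟩

omit [Fintype V] in
theorem coeff_eq_of_merged (hc : ∀ e, Finset.card {f | c f e ≠ 0} ≤ 2) {a : F → ZMod 2}
    (ha : ∀ e ∉ G'.edgeSet, (∑ f, a f • c f) e = 0) {f g : F}
    (hfg : mergeSetoid c G' f g) : a f = a g := by
  classical
  induction hfg with
  | refl => rfl
  | symm _ _ _ ih => exact ih.symm
  | trans _ _ _ _ _ ih₁ ih₂ => exact ih₁.trans ih₂
  | rel f g h =>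
    obtain ⟨e, he, hf, hg⟩ := h
    by_contra hne
    have hfg : f ≠ g := fun h => hne (h ▸ rfl)
    have hpair : Finset.univ.filter (fun k => c k e ≠ 0) = {f, g} := by
      refine (Finset.eq_of_subset_of_card_le (fun k hk => ?_) ?_).symm
      · rcases Finset.mem_insert.mp hk with rfl | hk
        · simpa using hf
        · simpa [Finset.mem_singleton.mp hk] using hg
      · rw [Finset.card_pair hfg]
        exact hc e
    have hsum := ha e he
    rw [Finset.sum_apply, ← Finset.sum_filter_of_ne (p := fun k => c k e ≠ 0)
      (fun k _ hk hke => hk (by simp [hke])), hpair, Finset.sum_pair hfg] at hsum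
    simp only [Pi.smul_apply, zmod_two_eq_one_of_ne_zero hf, zmod_two_eq_one_of_ne_zero hg,
      smul_eq_mul, mul_one] at hsum
    exact hne (CharTwo.add_eq_zero.mp hsum)

open Classical in
theorem mergedFace_isFacialCover (hc : IsFacialCover G c) (hG' : G' ≤ G) :
    IsFacialCover G' (mergedFace c G') where
  mem_cycleSpace κ := by
    refine ⟨fun a b hab => ⟨?_, trivial, trivial⟩, ?_⟩
    · by_contra hadj
      exact hab (hc.mergedFace_apply_eq_zero hadj κ)
    · exact sum_mem fun f _ => (hc.mem_cycleSpace f).2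
  le_span z hz := by
    have hzG : z ∈ cycleSpace G Set.univ :=
      ⟨fun a b hab => ⟨hG' (hz.1 hab).1, trivial, trivial⟩, hz.2⟩
    obtain ⟨a, rfl⟩ := (Submodule.mem_span_range_iff_exists_fun (ZMod 2)).mp (hc.le_span hzG)
    have ha : ∀ e ∉ G'.edgeSet, (∑ f, a f • c f) e = 0 :=
      fun e he => apply_eq_zero_of_notMem_edgeSet hz.1 he
    refine (Submodule.mem_span_range_iff_exists_fun (ZMod 2)).mpr
      ⟨Quotient.lift a fun f g => coeff_eq_of_merged hc.card_le_two ha, ?_⟩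
    simp only [mergedFace, Finset.smul_sum]
    rw [← Finset.sum_fiberwise (s := Finset.univ)
      (g := fun f => (⟦f⟧ : Quotient (mergeSetoid c G')))]
    refine Finset.sum_congr rfl fun κ _ => Finset.sum_congr rfl fun f hf => ?_
    rw [← (Finset.mem_filter.mp hf).2, Quotient.lift_mk]
  sum_eq_zero := by
    simp only [mergedFace]
    rw [Finset.sum_fiberwise, hc.sum_eq_zero]
  card_le_two e := by
    refine le_trans (Finset.card_le_card (fun κ hκ => ?_))
      ((Finset.card_image_le (f := fun f => (⟦f⟧ : Quotient (mergeSetoid c G')))).trans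
        (hc.card_le_two e))
    have hκe := (Finset.mem_filter.mp hκ).2
    rw [mergedFace, Finset.sum_apply] at hκe
    obtain ⟨f, hf, hfe⟩ := Finset.exists_ne_zero_of_sum_ne_zero hκe
    exact Finset.mem_image.mpr ⟨f, by simpa using hfe, (Finset.mem_filter.mp hf).2⟩

end IsFacialCover

end FacialCover

section MinorModel

variable {V W : Type*} {G : SimpleGraph V} {H : SimpleGraph W}

/-- A model of `H` as a minor of `G` in which one edge of `G` is chosen for every edge of `H`:
for an edge `s(w, w')` of `H` its ends are `link s(w, w') w` and `link s(w, w') w'`. -/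
structure MinorModel (H : SimpleGraph W) (G : SimpleGraph V) where
  branch : W → Set V
  connected : ∀ w, (G.induce (branch w)).Connected
  disjoint : Pairwise fun w₁ w₂ => Disjoint (branch w₁) (branch w₂)
  link : Sym2 W → W → V
  link_mem : ∀ ⦃w w'⦄, H.Adj w w' → link s(w, w') w ∈ branch w
  link_adj : ∀ ⦃w w'⦄, H.Adj w w' → G.Adj (link s(w, w') w) (link s(w, w') w')

theorem exists_minorModel (h : H.IsMinorOf G) : Nonempty (MinorModel H G) := by
  classical
  obtain ⟨f, hconn, hdisj, hadj⟩ := h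
  have hlink (e : Sym2 W) : ∃ q : W → V, ∀ w w', e = s(w, w') → H.Adj w w' →
      q w ∈ f w ∧ G.Adj (q w) (q w') := by
    induction e with
    | h a b =>
      by_cases hab : H.Adj a b
      · obtain ⟨x, hx, y, hy, hxy⟩ := hadj hab
        refine ⟨fun w => if w = a then x else y, fun w w' he _ => ?_⟩
        rcases Sym2.eq_iff.mp he with ⟨rfl, rfl⟩ | ⟨rfl, rfl⟩
        · simpa [hab.ne'] using ⟨hx, hxy⟩
        · simpa [hab.ne'] using ⟨hy, hxy.symm⟩
      · have : Nonempty V := (hconn a).nonempty.map Subtype.val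
        refine ⟨fun _ => Classical.arbitrary V, fun w w' he hw => (hab ?_).elim⟩
        rcases Sym2.eq_iff.mp he with ⟨rfl, rfl⟩ | ⟨rfl, rfl⟩
        exacts [hw, hw.symm]
  choose q hq using hlink
  exact ⟨f, hconn, hdisj, q, fun w w' h => (hq _ w w' rfl h).1, fun w w' h => (hq _ w w' rfl h).2⟩

namespace MinorModel

variable (M : MinorModel H G)

/-- The edge of `G` chosen for an edge of `H`. -/
def edge (e : Sym2 W) : Sym2 V :=
  e.map (M.link e)

/-- The subgraph of `G` formed by the branch sets and the chosen edges between them. -/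
def graph : SimpleGraph V where
  Adj v u := G.Adj v u ∧ ((∃ w, v ∈ M.branch w ∧ u ∈ M.branch w) ∨
    ∃ w w', H.Adj w w' ∧ v = M.link s(w, w') w ∧ u = M.link s(w, w') w')
  symm := ⟨fun _ _ h => ⟨h.1.symm, h.2.imp (fun ⟨w, h₁, h₂⟩ => ⟨w, h₂, h₁⟩)
    fun ⟨w, w', h, h₁, h₂⟩ => ⟨w', w, h.symm, Sym2.eq_swap ▸ h₂, Sym2.eq_swap ▸ h₁⟩⟩⟩
  loopless := ⟨fun _ h => h.1.ne rfl⟩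

open Classical in
/-- Contracting the branch sets, as a map on chains. -/
noncomputable def contract : (Sym2 V → ZMod 2) →ₗ[ZMod 2] (Sym2 W → ZMod 2) where
  toFun z e := if e ∈ H.edgeSet then z (M.edge e) else 0
  map_add' x y := by ext e; by_cases he : e ∈ H.edgeSet <;> simp [he]
  map_smul' a x := by ext e; by_cases he : e ∈ H.edgeSet <;> simp [he]

theorem eq_of_mem_branch {v : V} {w w' : W} (h : v ∈ M.branch w) (h' : v ∈ M.branch w') :
    w = w' :=
  not_not.mp fun hne => Set.disjoint_left.mp (M.disjoint hne) h h'

theorem link_mem_right {w w' : W} (h : H.Adj w w') : M.link s(w, w') w' ∈ M.branch w' :=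
  Sym2.eq_swap (a := w) ▸ M.link_mem h.symm

theorem graph_le : M.graph ≤ G := fun _ _ h => h.1

theorem graph_adj_link {w w' : W} (h : H.Adj w w') :
    M.graph.Adj (M.link s(w, w') w) (M.link s(w, w') w') :=
  ⟨M.link_adj h, Or.inr ⟨w, w', h, rfl, rfl⟩⟩

theorem connected_graph_induce_branch (w : W) : (M.graph.induce (M.branch w)).Connected := by
  have : M.graph.induce (M.branch w) = G.induce (M.branch w) := by
    ext x y
    exact ⟨fun h => h.1, fun h => ⟨h, Or.inl ⟨w, x.2, y.2⟩⟩⟩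
  exact this ▸ M.connected w

theorem edge_injOn : Set.InjOn M.edge H.edgeSet := by
  rintro ⟨a, b⟩ hab ⟨x, y⟩ hxy h
  rcases Sym2.eq_iff.mp h with ⟨h₁, h₂⟩ | ⟨h₁, h₂⟩
  · exact Sym2.eq_iff.mpr (Or.inl ⟨M.eq_of_mem_branch (M.link_mem hab) (h₁ ▸ M.link_mem hxy),
      M.eq_of_mem_branch (M.link_mem_right hab) (h₂ ▸ M.link_mem_right hxy)⟩)
  · exact Sym2.eq_iff.mpr (Or.inr ⟨M.eq_of_mem_branch (M.link_mem hab) (h₁ ▸ M.link_mem_right hxy),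
      M.eq_of_mem_branch (M.link_mem_right hab) (h₂ ▸ M.link_mem hxy)⟩)

theorem contract_apply_of_adj (z : Sym2 V → ZMod 2) {w w' : W} (h : H.Adj w w') :
    M.contract z s(w, w') = z s(M.link s(w, w') w, M.link s(w, w') w') :=
  if_pos h

theorem contract_mem_chainSpace (z : Sym2 V → ZMod 2) :
    M.contract z ∈ chainSpace H Set.univ := fun _ _ h =>
  ⟨not_not.mp fun hw => h (if_neg hw), trivial, trivial⟩

theorem contract_eq_zero_of_mem_branch {w : W} {z : Sym2 V → ZMod 2}
    (hz : z ∈ chainSpace M.graph (M.branch w)) : M.contract z = 0 := by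
  ext e
  induction e with
  | h a b =>
    by_contra hne
    have hab := (M.contract_mem_chainSpace z hne).1
    obtain ⟨-, ha, hb⟩ := hz (M.contract_apply_of_adj z hab ▸ hne)
    exact hab.ne ((M.eq_of_mem_branch (M.link_mem hab) ha).trans
      (M.eq_of_mem_branch (M.link_mem_right hab) hb).symm)

theorem exists_chain_contract_eq [Finite W] {y : Sym2 W → ZMod 2} (hy : y ∈ chainSpace H Set.univ) :
    ∃ z ∈ chainSpace M.graph (⋃ w, M.branch w), M.contract z = y := by
  cases nonempty_fintype W
  classical
  refine ⟨∑ e, y e • Pi.single (M.edge e) 1, sum_mem fun e _ => ?_, funext fun e => ?_⟩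
  · by_cases he : y e = 0
    · rw [he, zero_smul]
      exact zero_mem _
    · induction e with
      | h a b =>
        have hab := (hy he).1
        exact Submodule.smul_mem _ _ (single_mem_chainSpace (M.graph_adj_link hab)
          (Set.mem_iUnion_of_mem a (M.link_mem hab))
          (Set.mem_iUnion_of_mem b (M.link_mem_right hab)))
  · have hsupp (e' : Sym2 W) (he' : e' ∉ H.edgeSet) : y e' = 0 :=
      apply_eq_zero_of_notMem_edgeSet hy he'
    by_cases he : e ∈ H.edgeSet
    · change (if e ∈ H.edgeSet then (∑ e', y e' • Pi.single (M.edge e') 1) (M.edge e) else 0) = y e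
      rw [if_pos he, Finset.sum_apply, Finset.sum_eq_single e]
      · simp
      · intro e' _ hne
        by_cases he' : e' ∈ H.edgeSet
        · rw [Pi.smul_apply, Pi.single_eq_of_ne fun h => hne (M.edge_injOn he he' h).symm,
            smul_zero]
        · simp [hsupp e' he']
      · simp
    · rw [hsupp e he]
      exact if_neg he

variable [Fintype V] [Fintype W]

open Classical in
theorem boundary_contract {z : Sym2 V → ZMod 2} (hz : z ∈ chainSpace M.graph Set.univ) (w : W) :
    boundary (M.contract z) w = ∑ v ∈ (M.branch w).toFinset, boundary z v := by
  rw [sum_boundary_eq_sum_cut hz, ← Finset.sum_product', boundary_apply]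
  refine Finset.sum_bij_ne_zero (fun w' _ _ => (M.link s(w, w') w, M.link s(w, w') w'))
    (fun w' _ hw' => ?_) (fun w₁ _ h₁ w₂ _ h₂ h => ?_) (fun p hp hne => ?_) (fun w' _ hw' => ?_)
  · have hadj := (M.contract_mem_chainSpace z hw').1
    have : M.link s(w, w') w' ∉ M.branch w := fun h =>
      hadj.ne (M.eq_of_mem_branch h (M.link_mem_right hadj))
    simpa [this] using M.link_mem hadj
  · have hadj₁ := (M.contract_mem_chainSpace z h₁).1
    have hadj₂ := (M.contract_mem_chainSpace z h₂).1
    have hlink : M.link s(w, w₁) w₁ = M.link s(w, w₂) w₂ := congrArg Prod.snd h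
    exact M.eq_of_mem_branch (M.link_mem_right hadj₁) (hlink ▸ M.link_mem_right hadj₂)
  · obtain ⟨v, u⟩ := p
    obtain ⟨hv, hu⟩ : v ∈ M.branch w ∧ u ∉ M.branch w := by simpa using hp
    obtain ⟨x, hvx, hux⟩ | ⟨x, x', hx, rfl, rfl⟩ := (hz hne).1.2
    · exact (hu (M.eq_of_mem_branch hv hvx ▸ hux)).elim
    · obtain rfl := M.eq_of_mem_branch hv (M.link_mem hx)
      exact ⟨x', Finset.mem_univ x', M.contract_apply_of_adj z hx ▸ hne, rfl⟩
  · exact M.contract_apply_of_adj z (M.contract_mem_chainSpace z hw').1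

theorem contract_mem_cycleSpace {z : Sym2 V → ZMod 2} (hz : z ∈ cycleSpace M.graph Set.univ) :
    M.contract z ∈ cycleSpace H Set.univ := by
  classical
  refine ⟨M.contract_mem_chainSpace z, funext fun w => ?_⟩
  rw [M.boundary_contract hz.1]
  simp [LinearMap.mem_ker.mp hz.2]

theorem exists_cycle_contract_eq {y : Sym2 W → ZMod 2} (hy : y ∈ cycleSpace H Set.univ) :
    ∃ z ∈ cycleSpace M.graph Set.univ, M.contract z = y := by
  classical
  obtain ⟨z, hz, rfl⟩ := M.exists_chain_contract_eq hy.1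
  have hcorr (w : W) : ∃ x ∈ chainSpace M.graph (M.branch w),
      boundary x = fun v => if v ∈ M.branch w then boundary z v else 0 := by
    refine exists_chain_of_sum_eq_zero (M.connected_graph_induce_branch w)
      (fun v hv => if_neg hv) ?_
    have hw := M.boundary_contract (chainSpace_mono (Set.subset_univ _) hz) w
    rw [LinearMap.mem_ker.mp hy.2, Pi.zero_apply] at hw
    rw [← Finset.sum_filter]
    exact (Finset.sum_congr (by ext; simp) fun _ _ => rfl).trans hw.symm
  choose x hx hbx using hcorr
  have hcontract : M.contract (∑ w, x w) = 0 := by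
    rw [map_sum]
    exact Finset.sum_eq_zero fun w _ => M.contract_eq_zero_of_mem_branch (hx w)
  refine ⟨z + ∑ w, x w, ⟨add_mem (chainSpace_mono (Set.subset_univ _) hz)
    (sum_mem fun w _ => chainSpace_mono (Set.subset_univ _) (hx w)), funext fun v => ?_⟩, ?_⟩
  · simp only [map_add, map_sum, hbx, Pi.add_apply, Finset.sum_apply, Pi.zero_apply]
    by_cases hv : ∃ w, v ∈ M.branch w
    · obtain ⟨w, hw⟩ := hv
      rw [Finset.sum_eq_single w, if_pos hw, CharTwo.add_self_eq_zero]
      · exact fun w' _ hne => if_neg fun hw' => hne (M.eq_of_mem_branch hw' hw)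
      · simp
    · rw [boundary_apply, Finset.sum_eq_zero fun u _ =>
        apply_eq_zero_of_notMem hz (by simpa using hv) u, zero_add]
      exact Finset.sum_eq_zero fun w _ => if_neg fun hw => hv ⟨w, hw⟩
  · rw [map_add, hcontract, add_zero]

end MinorModel

end MinorModel

section FacialCover

variable {V W F : Type*} [Fintype V] [Fintype W] [Fintype F] {G : SimpleGraph V}
  {H : SimpleGraph W} {c : F → Sym2 V → ZMod 2}

namespace IsFacialCover

theorem contract (M : MinorModel H G) (hc : IsFacialCover M.graph c) :
    IsFacialCover H fun f => M.contract (c f) where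
  mem_cycleSpace f := M.contract_mem_cycleSpace (hc.mem_cycleSpace f)
  le_span y hy := by
    obtain ⟨z, hz, rfl⟩ := M.exists_cycle_contract_eq hy
    obtain ⟨a, rfl⟩ := (Submodule.mem_span_range_iff_exists_fun (ZMod 2)).mp (hc.le_span hz)
    exact (Submodule.mem_span_range_iff_exists_fun (ZMod 2)).mpr
      ⟨a, by simp only [map_sum, map_smul]⟩
  sum_eq_zero := by rw [← map_sum, hc.sum_eq_zero, map_zero]
  card_le_two e := by
    refine (Finset.card_le_card fun f hf => ?_).trans (hc.card_le_two (M.edge e))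
    refine Finset.mem_filter.mpr ⟨Finset.mem_univ f, fun h => (Finset.mem_filter.mp hf).2 ?_⟩
    by_cases he : e ∈ H.edgeSet
    · exact (if_pos he).trans h
    · exact if_neg he

theorem girth_mul_card_edgeSet_le_of_isMinorOf (hc : IsFacialCover G c) (h : H.IsMinorOf G) :
    H.girth * (H.edgeSet.ncard + 2) ≤ 2 * H.edgeSet.ncard + H.girth * Fintype.card W := by
  classical
  obtain ⟨M⟩ := exists_minorModel h
  exact ((hc.mergedFace_isFacialCover M.graph_le).contract M).girth_mul_card_edgeSet_le

end IsFacialCover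

end FacialCover

section Girth

variable {V : Type*} {G : SimpleGraph V} {a b c d e : V}

theorem exists_isCycle_length_eq_three (hab : G.Adj a b) (hbc : G.Adj b c) (hca : G.Adj c a) :
    ∃ w : G.Walk a a, w.IsCycle ∧ w.length = 3 := by
  refine ⟨.cons hab (.cons hbc (.cons hca .nil)), ?_, rfl⟩
  simp only [Walk.cons_isCycle_iff, Walk.cons_isPath_iff, Walk.edges_cons, Walk.support_cons]
  simp [hab.ne', hbc.ne, hca.ne, hca.ne']

theorem exists_isCycle_length_eq_four (hab : G.Adj a b) (hbc : G.Adj b c) (hcd : G.Adj c d)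
    (hda : G.Adj d a) (hac : a ≠ c) (hbd : b ≠ d) :
    ∃ w : G.Walk a a, w.IsCycle ∧ w.length = 4 := by
  refine ⟨.cons hab (.cons hbc (.cons hcd (.cons hda .nil))), ?_, rfl⟩
  simp only [Walk.cons_isCycle_iff, Walk.cons_isPath_iff, Walk.edges_cons, Walk.support_cons]
  simp [hab.ne', hbc.ne, hcd.ne, hda.ne, hac, hac.symm, hbd]

theorem exists_isCycle_length_eq_five (hab : G.Adj a b) (hbc : G.Adj b c) (hcd : G.Adj c d)
    (hde : G.Adj d e) (hea : G.Adj e a) (hnodup : [a, b, c, d, e].Nodup) :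
    ∃ w : G.Walk a a, w.IsCycle ∧ w.length = 5 := by
  refine ⟨.cons hab (.cons hbc (.cons hcd (.cons hde (.cons hea .nil)))), ?_, rfl⟩
  simp only [List.nodup_cons, List.mem_cons, List.not_mem_nil, or_false] at hnodup
  simp only [Walk.cons_isCycle_iff, Walk.cons_isPath_iff, Walk.edges_cons, Walk.support_cons]
  simp
  grind

theorem exists_adj_of_length_eq_three (w : G.Walk a a) (h : w.length = 3) :
    ∃ b c, G.Adj a b ∧ G.Adj b c ∧ G.Adj c a := by
  match w, h with
  | .cons hab (.cons hbc (.cons hca .nil)), _ => exact ⟨_, _, hab, hbc, hca⟩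

theorem exists_adj_of_length_eq_four {w : G.Walk a a} (hw : w.IsCycle) (h : w.length = 4) :
    ∃ b c d, G.Adj a b ∧ G.Adj b c ∧ G.Adj c d ∧ G.Adj d a ∧ a ≠ c ∧ b ≠ d := by
  match w, hw, h with
  | .cons hab (.cons hbc (.cons hcd (.cons hda .nil))), hw, _ =>
    refine ⟨_, _, _, hab, hbc, hcd, hda, ?_⟩
    simp [Walk.cons_isCycle_iff, Walk.cons_isPath_iff] at hw
    grind

theorem not_adj_of_four_le_girth (h : 4 ≤ G.girth) (hab : G.Adj a b) (hbc : G.Adj b c) :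
    ¬ G.Adj c a := fun hca => by
  obtain ⟨w, hw, hlen⟩ := exists_isCycle_length_eq_three hab hbc hca
  have := girth_le_length hw
  lia

theorem eq_of_five_le_girth (h : 5 ≤ G.girth) (hab : G.Adj a b) (hbc : G.Adj b c)
    (had : G.Adj a d) (hdc : G.Adj d c) (hac : a ≠ c) : b = d := by
  by_contra hbd
  obtain ⟨w, hw, hlen⟩ := exists_isCycle_length_eq_four hab hbc hdc.symm had.symm hac hbd
  have := girth_le_length hw
  lia

theorem girth_eq_length {w : G.Walk a a} (hw : w.IsCycle)
    (h : ∀ (b : V) (w' : G.Walk b b), w'.IsCycle → w.length ≤ w'.length) :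
    G.girth = w.length := by
  obtain ⟨b, w', hw', hlen⟩ := exists_girth_eq_length.mpr fun hacyclic => hacyclic w hw
  exact (girth_le_length hw).antisymm (hlen ▸ h b w' hw')

theorem girth_eq_three (hab : G.Adj a b) (hbc : G.Adj b c) (hca : G.Adj c a) : G.girth = 3 := by
  obtain ⟨w, hw, hlen⟩ := exists_isCycle_length_eq_three hab hbc hca
  exact hlen ▸ girth_eq_length hw fun _ _ hw' => hlen ▸ hw'.three_le_length

theorem girth_eq_four (hab : G.Adj a b) (hbc : G.Adj b c) (hcd : G.Adj c d) (hda : G.Adj d a)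
    (hac : a ≠ c) (hbd : b ≠ d) (htri : ∀ x y, G.Adj x y → ∀ z, G.Adj y z → ¬ G.Adj z x) :
    G.girth = 4 := by
  obtain ⟨w, hw, hlen⟩ := exists_isCycle_length_eq_four hab hbc hcd hda hac hbd
  refine hlen ▸ girth_eq_length hw fun x w' hw' => ?_
  by_contra hlt
  have := hw'.three_le_length
  obtain ⟨y, z, hxy, hyz, hzx⟩ := exists_adj_of_length_eq_three w' (by lia)
  exact htri x y hxy z hyz hzx

theorem girth_eq_five (hab : G.Adj a b) (hbc : G.Adj b c) (hcd : G.Adj c d) (hde : G.Adj d e)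
    (hea : G.Adj e a) (hnodup : [a, b, c, d, e].Nodup)
    (htri : ∀ x y, G.Adj x y → ∀ z, G.Adj y z → ¬ G.Adj z x)
    (hquad : ∀ x y, G.Adj x y → ∀ z, G.Adj y z → x ≠ z → ∀ t, G.Adj z t → G.Adj t x → y = t) :
    G.girth = 5 := by
  obtain ⟨w, hw, hlen⟩ := exists_isCycle_length_eq_five hab hbc hcd hde hea hnodup
  refine hlen ▸ girth_eq_length hw fun x w' hw' => ?_
  by_contra hlt
  have := hw'.three_le_length
  rcases (by lia : w'.length = 3 ∨ w'.length = 4) with h | h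
  · obtain ⟨y, z, hxy, hyz, hzx⟩ := exists_adj_of_length_eq_three w' h
    exact htri x y hxy z hyz hzx
  · obtain ⟨y, z, t, hxy, hyz, hzt, htx, hxz, hyt⟩ := exists_adj_of_length_eq_four hw' h
    exact hyt (hquad x y hxy z hyz hxz t hzt htx)

end Girth

section RegularGraphs

variable {V : Type*} [Fintype V] (G : SimpleGraph V) {k : ℕ}

theorem degN_eq_degree [DecidableRel G.Adj] (v : V) : G.degN v = G.degree v := by
  rw [degN, Set.ncard_eq_toFinset_card', ← card_neighborFinset_eq_degree]
  rfl

theorem two_mul_card_edgeSet (h : ∀ v, G.degN v = k) :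
    2 * G.edgeSet.ncard = Fintype.card V * k := by
  classical
  rw [← coe_edgeFinset, Set.ncard_coe_finset, ← sum_degrees_eq_twice_card_edges]
  simp [← degN_eq_degree, h]

end RegularGraphs

section Faces

variable {V F : Type*} {G : SimpleGraph V}

open Classical in
/-- The mod-2 sum of all edges of `G` with both ends in `C`. For a facial cycle without chords
this is the cycle as an element of the cycle space. -/
noncomputable def edgeIndicator (G : SimpleGraph V) (C : Set V) : Sym2 V → ZMod 2 :=
  fun e => if e ∈ G.edgeSet ∧ ∀ v ∈ e, v ∈ C then 1 else 0

open Classical in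
theorem edgeIndicator_apply (C : Set V) (a b : V) :
    edgeIndicator G C s(a, b) = if G.Adj a b ∧ a ∈ C ∧ b ∈ C then 1 else 0 := by
  simp [edgeIndicator]

theorem edgeIndicator_ne_zero_iff {C : Set V} {a b : V} :
    edgeIndicator G C s(a, b) ≠ 0 ↔ G.Adj a b ∧ a ∈ C ∧ b ∈ C := by
  classical
  simp [edgeIndicator_apply]

theorem edgeIndicator_mem_chainSpace (C : Set V) : edgeIndicator G C ∈ chainSpace G C :=
  fun _ _ h => edgeIndicator_ne_zero_iff.mp h

variable [Fintype V]

theorem boundary_edgeIndicator (C : Set V) {v : V} (hv : v ∈ C) :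
    boundary (edgeIndicator G C) v = ((G.neighborSet v ∩ C).ncard : ZMod 2) := by
  classical
  simp only [boundary_apply, edgeIndicator_apply, hv, true_and]
  rw [Finset.sum_boole, Set.ncard_eq_toFinset_card']
  congr 2
  ext w
  simp

theorem edgeIndicator_mem_cycleSpace {C : Set V}
    (h : ∀ v ∈ C, Even (G.neighborSet v ∩ C).ncard) : edgeIndicator G C ∈ cycleSpace G C := by
  refine ⟨edgeIndicator_mem_chainSpace C, funext fun v => ?_⟩
  by_cases hv : v ∈ C
  · rw [boundary_edgeIndicator C hv]
    exact ZMod.natCast_eq_zero_iff_even.mpr (h v hv)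
  · exact Finset.sum_eq_zero fun w _ =>
      apply_eq_zero_of_notMem (edgeIndicator_mem_chainSpace C) hv w

variable [Fintype F]

theorem card_ne_zero_le_two {c : F → Sym2 V → ZMod 2} (hc : ∀ f, c f ∈ cycleSpace G Set.univ)
    (htwo : ∀ e ∈ G.edgeSet, Finset.card {f | c f e ≠ 0} = 2) (e : Sym2 V) :
    Finset.card {f | c f e ≠ 0} ≤ 2 := by
  by_cases he : e ∈ G.edgeSet
  · exact (htwo e he).le
  · simp [apply_eq_zero_of_notMem_edgeSet (hc _).1 he]

theorem isFacialCover_of_card_eq_two {c : F → Sym2 V → ZMod 2}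
    (hc : ∀ f, c f ∈ cycleSpace G Set.univ)
    (hspan : cycleSpace G Set.univ ≤ Submodule.span (ZMod 2) (Set.range c))
    (htwo : ∀ e ∈ G.edgeSet, Finset.card {f | c f e ≠ 0} = 2) : IsFacialCover G c := by
  refine ⟨hc, hspan, funext fun e => ?_, card_ne_zero_le_two hc htwo⟩
  rw [Finset.sum_apply]
  by_cases he : e ∈ G.edgeSet
  · rw [← Finset.sum_filter_ne_zero, Finset.sum_congr rfl fun f hf =>
      zmod_two_eq_one_of_ne_zero (Finset.mem_filter.mp hf).2, Finset.sum_const, htwo e he]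
    rfl
  · exact Finset.sum_eq_zero fun f _ => apply_eq_zero_of_notMem_edgeSet (hc f).1 he

theorem isFacialCover_of_euler {c : F → Sym2 V → ZMod 2} (hG : G.Connected)
    (hc : ∀ f, c f ∈ cycleSpace G Set.univ)
    (htwo : ∀ e ∈ G.edgeSet, Finset.card {f | c f e ≠ 0} = 2)
    (hdual : ∀ f g, IsFacialCover.mergeSetoid c ⊥ f g)
    (heuler : Fintype.card V + Fintype.card F = G.edgeSet.ncard + 2) : IsFacialCover G c := by
  have hker : LinearMap.ker (Fintype.linearCombination (ZMod 2) c) ≤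
      Submodule.span (ZMod 2) {1} := by
    intro a ha
    have hconst (f g : F) : a f = a g := IsFacialCover.coeff_eq_of_merged
      (card_ne_zero_le_two hc htwo) (fun e _ => congrFun (LinearMap.mem_ker.mp ha) e) (hdual f g)
    refine Submodule.mem_span_singleton.mpr ?_
    rcases isEmpty_or_nonempty F with hF | ⟨⟨f⟩⟩
    · exact ⟨0, Subsingleton.elim _ _⟩
    · exact ⟨a f, funext fun g => by simp [hconst f g]⟩
  refine isFacialCover_of_card_eq_two hc (Submodule.eq_of_le_of_finrank_le
    (Submodule.span_le.mpr (by rintro _ ⟨f, rfl⟩; exact hc f)) ?_).ge htwo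
  have hrank := LinearMap.finrank_range_add_finrank_ker (Fintype.linearCombination (ZMod 2) c)
  have hker_le := (Submodule.finrank_mono hker).trans (finrank_span_le_card _)
  have hcycle := finrank_cycleSpace_add_card hG
  rw [Set.toFinset_singleton, Finset.card_singleton] at hker_le
  rw [Fintype.range_linearCombination, Module.finrank_fintype_fun_eq_card] at hrank
  lia

end Faces

instance decidableRelCompleteBipartiteGraph (V W : Type*) :
    DecidableRel (completeBipartiteGraph V W).Adj :=
  fun a b => inferInstanceAs (Decidable (a.isLeft ∧ b.isRight ∨ a.isRight ∧ b.isLeft))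

theorem IsFacialCover.isPlanar {V F : Type*} {G : SimpleGraph V} [Fintype V] [Fintype F]
    {c : F → Sym2 V → ZMod 2} (hc : IsFacialCover G c) : G.IsPlanar := by
  constructor <;> intro h
  · have hgirth : (completeGraph (Fin 5)).girth = 3 :=
      girth_eq_three (a := 0) (b := 1) (c := 2) (by decide) (by decide) (by decide)
    have hcard := two_mul_card_edgeSet (completeGraph (Fin 5)) (k := 4) fun v => by
      simp [degN_eq_degree]
    have hbound := hc.girth_mul_card_edgeSet_le_of_isMinorOf h
    simp only [hgirth, Fintype.card_fin] at hbound hcard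
    lia
  · have hgirth : (completeBipartiteGraph (Fin 3) (Fin 3)).girth = 4 :=
      girth_eq_four (a := .inl 0) (b := .inr 0) (c := .inl 1) (d := .inr 1) (by decide) (by decide)
        (by decide) (by decide) (by decide) (by decide) (by decide)
    have hcard := two_mul_card_edgeSet (completeBipartiteGraph (Fin 3) (Fin 3)) (k := 3) fun v => by
      rw [degN_eq_degree]; revert v; decide
    have hbound := hc.girth_mul_card_edgeSet_le_of_isMinorOf h
    simp only [hgirth, Fintype.card_sum, Fintype.card_fin] at hbound hcard
    lia

section PlatonicSolids

theorem forall_setoid_of_forall_exists_lt {n : ℕ} [NeZero n] (r : Setoid (Fin n))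
    (h : ∀ i ≠ 0, ∃ j < i, r i j) (i j : Fin n) : r i j := by
  have hzero (i : Fin n) : r i 0 := by
    induction i using WellFoundedLT.induction with
    | ind i ih =>
      by_cases hi : i = 0
      · exact hi ▸ r.refl _
      · obtain ⟨j, hj, hij⟩ := h i hi
        exact r.trans hij (ih j hj)
  exact r.trans (hzero i) (r.symm (hzero j))

theorem isPlanar_of_faces {n f k : ℕ} [NeZero n] [NeZero f] (G : SimpleGraph (Fin n))
    [DecidableRel G.Adj] (C : Fin f → Finset (Fin n)) (hdeg : ∀ v, G.degN v = k)
    (hconn : ∀ i ≠ 0, ∃ j < i, G.Adj i j)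
    (heven : ∀ i, ∀ v ∈ C i, Even (Finset.card {w ∈ C i | G.Adj v w}))
    (htwo : ∀ a b, G.Adj a b → Finset.card {i | a ∈ C i ∧ b ∈ C i} = 2)
    (hdual : ∀ i ≠ 0, ∃ j < i, ∃ a ∈ C i ∩ C j, ∃ b ∈ C i ∩ C j, G.Adj a b)
    (heuler : 2 * (n + f) = n * k + 4) : G.IsPlanar := by
  let c : Fin f → Sym2 (Fin n) → ZMod 2 := fun i => edgeIndicator G (C i)
  have hreach := forall_setoid_of_forall_exists_lt G.reachableSetoid fun i hi =>
    let ⟨j, hj, hij⟩ := hconn i hi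
    ⟨j, hj, hij.reachable⟩
  have hcard := two_mul_card_edgeSet G hdeg
  rw [Fintype.card_fin] at hcard
  refine (isFacialCover_of_euler (c := c) ⟨hreach⟩ (fun i => ?_) (fun e he => ?_)
    (forall_setoid_of_forall_exists_lt _ fun i hi => ?_) ?_).isPlanar
  · refine cycleSpace_mono (Set.subset_univ (C i : Set (Fin n)))
      (edgeIndicator_mem_cycleSpace fun v hv => ?_)
    convert heven i v hv
    rw [← Set.ncard_coe_finset]
    congr 1
    ext w
    simp [and_comm]
  · induction e with
    | h a b =>
      convert htwo a b he using 2
      ext i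
      simpa [c, edgeIndicator_ne_zero_iff] using fun _ _ => he
  · obtain ⟨j, hj, a, ha, b, hb, hab⟩ := hdual i hi
    rw [Finset.mem_inter] at ha hb
    exact ⟨j, hj, Relation.EqvGen.rel _ _ ⟨s(a, b), by simp,
      edgeIndicator_ne_zero_iff.mpr ⟨hab, ha.1, hb.1⟩,
      edgeIndicator_ne_zero_iff.mpr ⟨hab, ha.2, hb.2⟩⟩⟩
  · simp only [Fintype.card_fin]
    lia

instance tetrahedron.decidableRel : DecidableRel tetrahedron.Adj :=
  inferInstanceAs (DecidableRel (completeGraph (Fin 4)).Adj)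

instance cubeGraph.decidableRel : DecidableRel cubeGraph.Adj := by
  unfold cubeGraph; infer_instance

instance octahedron.decidableRel : DecidableRel octahedron.Adj := by
  unfold octahedron; infer_instance

instance dodecahedron.decidableRel : DecidableRel dodecahedron.Adj := by
  unfold dodecahedron; infer_instance

instance icosahedron.decidableRel : DecidableRel icosahedron.Adj := by
  unfold icosahedron; infer_instance

theorem tetrahedron_degN (v : Fin 4) : tetrahedron.degN v = 3 := by
  rw [degN_eq_degree]; revert v; decide +kernel

theorem cubeGraph_degN (v : Fin 8) : cubeGraph.degN v = 3 := by
  rw [degN_eq_degree]; revert v; decide +kernel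

theorem dodecahedron_degN (v : Fin 20) : dodecahedron.degN v = 3 := by
  rw [degN_eq_degree]; revert v; decide +kernel

theorem octahedron_degN (v : Fin 6) : octahedron.degN v = 4 := by
  rw [degN_eq_degree]; revert v; decide +kernel

theorem icosahedron_degN (v : Fin 12) : icosahedron.degN v = 5 := by
  rw [degN_eq_degree]; revert v; decide +kernel

theorem tetrahedron_girth : tetrahedron.girth = 3 :=
  girth_eq_three (a := 0) (b := 1) (c := 2) (by decide) (by decide) (by decide)

theorem cubeGraph_girth : cubeGraph.girth = 4 :=
  girth_eq_four (a := 0) (b := 1) (c := 3) (d := 2) (by decide) (by decide) (by decide)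
    (by decide) (by decide) (by decide) (by decide +kernel)

theorem dodecahedron_girth : dodecahedron.girth = 5 :=
  girth_eq_five (a := 0) (b := 1) (c := 2) (d := 12) (e := 10) (by decide) (by decide)
    (by decide) (by decide) (by decide) (by decide) (by decide +kernel) (by decide +kernel)

theorem octahedron_girth : octahedron.girth = 3 :=
  girth_eq_three (a := 0) (b := 1) (c := 2) (by decide) (by decide) (by decide)

theorem icosahedron_girth : icosahedron.girth = 3 :=
  girth_eq_three (a := 0) (b := 1) (c := 2) (by decide) (by decide) (by decide)

theorem tetrahedron_isPlanar : tetrahedron.IsPlanar :=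
  isPlanar_of_faces tetrahedron ![{0, 1, 2}, {0, 1, 3}, {0, 2, 3}, {1, 2, 3}] tetrahedron_degN
    (by decide +kernel) (by decide +kernel) (by decide +kernel) (by decide +kernel) rfl

theorem cubeGraph_isPlanar : cubeGraph.IsPlanar :=
  isPlanar_of_faces cubeGraph
    ![{0, 1, 2, 3}, {0, 1, 4, 5}, {0, 2, 4, 6}, {1, 3, 5, 7}, {2, 3, 6, 7}, {4, 5, 6, 7}]
    cubeGraph_degN
    (by decide +kernel) (by decide +kernel) (by decide +kernel) (by decide +kernel) rfl

theorem dodecahedron_isPlanar : dodecahedron.IsPlanar :=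
  isPlanar_of_faces dodecahedron
    ![{10, 12, 14, 16, 18}, {0, 1, 2, 12, 10}, {2, 3, 4, 14, 12}, {4, 5, 6, 16, 14},
      {6, 7, 8, 18, 16}, {8, 9, 0, 10, 18}, {1, 2, 3, 13, 11}, {3, 4, 5, 15, 13},
      {5, 6, 7, 17, 15}, {7, 8, 9, 19, 17}, {9, 0, 1, 11, 19}, {11, 13, 15, 17, 19}]
    dodecahedron_degN
    (by decide +kernel) (by decide +kernel) (by decide +kernel) (by decide +kernel) rfl

theorem octahedron_isPlanar : octahedron.IsPlanar :=
  isPlanar_of_faces octahedron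
    ![{0, 1, 2}, {0, 1, 5}, {0, 4, 2}, {0, 4, 5}, {3, 1, 2}, {3, 1, 5}, {3, 4, 2}, {3, 4, 5}]
    octahedron_degN
    (by decide +kernel) (by decide +kernel) (by decide +kernel) (by decide +kernel) rfl

theorem icosahedron_isPlanar : icosahedron.IsPlanar :=
  isPlanar_of_faces icosahedron
    ![{0, 1, 2}, {0, 2, 3}, {0, 3, 4}, {0, 4, 5}, {0, 5, 1},
      {1, 2, 7}, {2, 3, 8}, {3, 4, 9}, {4, 5, 10}, {5, 1, 6},
      {1, 6, 7}, {2, 7, 8}, {3, 8, 9}, {4, 9, 10}, {5, 10, 6},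
      {11, 6, 7}, {11, 7, 8}, {11, 8, 9}, {11, 9, 10}, {11, 10, 6}]
    icosahedron_degN
    (by decide +kernel) (by decide +kernel) (by decide +kernel) (by decide +kernel) rfl

end PlatonicSolids

section Splitting

variable {V : Type*} [Fintype V] {G : SimpleGraph V} {U X : Set V} {z : Sym2 V → ZMod 2}
  {W : Submodule (ZMod 2) (Sym2 V → ZMod 2)} {p q r t : V}

theorem sum_component_apply_eq_zero [Fintype X] (hz : z ∈ cycleSpace G U)
    (hX : IsComponentOf G X (U \ {t})) : ∑ p ∈ X.toFinset, z s(t, p) = 0 := by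
  classical
  have htX : t ∉ X := fun ht => (hX.subset ht).2 rfl
  rw [← sum_cut_eq_zero hz X.toFinset]
  refine Finset.sum_congr rfl fun p hp => ?_
  rw [Set.mem_toFinset] at hp
  rw [Finset.sum_eq_single_of_mem t (by simpa using htX), Sym2.eq_swap]
  intro u hu hut
  by_contra hne
  obtain ⟨hpu, -, huU⟩ := hz.1 hne
  exact (by simpa using hu : u ∉ X) (hX.mem_of_adj p hp u ⟨huU, hut⟩ hpu)

variable [DecidableEq V]

theorem exists_cycle_through (hX : (G.induce X).Connected) (ht : t ∉ X) (hp : p ∈ X) (hq : q ∈ X)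
    (htp : G.Adj t p) (htq : G.Adj t q) : ∃ z ∈ cycleSpace G (insert t X),
      ∀ w, z s(t, w) = (Pi.single p 1 + Pi.single q 1 : V → ZMod 2) w := by
  obtain ⟨z, hz, hbz⟩ := exists_chain_of_connected hX hp hq
  have hedge {a : V} (ha : a ∈ X) (hta : G.Adj t a) :
      Pi.single s(t, a) 1 ∈ chainSpace G (insert t X) :=
    single_mem_chainSpace hta (Set.mem_insert t X) (Set.mem_insert_of_mem t ha)
  refine ⟨z + (Pi.single s(t, p) 1 + Pi.single s(t, q) 1),
    ⟨add_mem (chainSpace_mono (Set.subset_insert t X) hz) (add_mem (hedge hp htp) (hedge hq htq)),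
      ?_⟩, fun w => ?_⟩
  · refine LinearMap.mem_ker.mpr ?_
    rw [map_add, map_add, hbz, boundary_single htp.ne, boundary_single htq.ne,
      add_add_add_comm (Pi.single t 1), zmod_two_fun_add_self, zero_add, zmod_two_fun_add_self]
  · simp [apply_eq_zero_of_notMem hz ht, Pi.single_apply, htp.ne, htq.ne]

/-- The edges `tp` and `tq` form the star at `t` of some cycle-space element of `G[U]` lying in
`W`. Modulo `W`, one may then be traded for the other. -/
def IsLinked (G : SimpleGraph V) (W : Submodule (ZMod 2) (Sym2 V → ZMod 2)) (U : Set V)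
    (t p q : V) : Prop :=
  ∃ z ∈ cycleSpace G U, z ∈ W ∧
    ∀ w, z s(t, w) = (Pi.single p 1 + Pi.single q 1 : V → ZMod 2) w

namespace IsLinked

theorem refl (t p : V) : IsLinked G W U t p p :=
  ⟨0, zero_mem _, zero_mem _, fun w => by rw [zmod_two_fun_add_self]; rfl⟩

theorem symm (h : IsLinked G W U t p q) : IsLinked G W U t q p :=
  let ⟨z, hz, hzW, hzt⟩ := h
  ⟨z, hz, hzW, fun w => by rw [hzt, add_comm]⟩

theorem trans (hpq : IsLinked G W U t p q) (hqr : IsLinked G W U t q r) :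
    IsLinked G W U t p r := by
  obtain ⟨y, hy, hyW, hyt⟩ := hpq
  obtain ⟨z, hz, hzW, hzt⟩ := hqr
  refine ⟨y + z, add_mem hy hz, add_mem hyW hzW, fun w => ?_⟩
  rw [Pi.add_apply, hyt, hzt, ← Pi.add_apply, add_assoc, ← add_assoc (Pi.single q 1),
    zmod_two_fun_add_self, zero_add]

theorem of_connected {t' : V} (hW : cycleSpace G (U \ {t'}) ≤ W) (hX : (G.induce X).Connected)
    (hXU : X ⊆ U \ {t}) (ht'X : t' ∉ X) (ht : t ∈ U) (htt' : t ≠ t') (hp : p ∈ X) (hq : q ∈ X)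
    (htp : G.Adj t p) (htq : G.Adj t q) : IsLinked G W U t p q := by
  obtain ⟨z, hz, hzt⟩ := exists_cycle_through hX (fun h => (hXU h).2 rfl) hp hq htp htq
  have hsub : insert t X ⊆ U \ {t'} := Set.insert_subset ⟨ht, htt'⟩ fun v hv =>
    ⟨(hXU hv).1, fun h => ht'X (h ▸ hv)⟩
  exact ⟨z, cycleSpace_mono (hsub.trans Set.sdiff_subset) hz, hW (cycleSpace_mono hsub hz), hzt⟩

end IsLinked

theorem cycleSpace_le_of_isLinked (hW : cycleSpace G (U \ {t}) ≤ W)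
    (h : ∀ X ⊆ U \ {t}, (G.induce X).Connected → ∀ p ∈ X, ∀ q ∈ X, G.Adj t p → G.Adj t q →
      IsLinked G W U t p q) : cycleSpace G U ≤ W := by
  intro z hz
  induction hn : Finset.card {w | z s(t, w) ≠ 0} using Nat.strong_induction_on generalizing z with
  | _ n ih =>
  subst hn
  by_cases hzero : ∀ w, z s(t, w) = 0
  · refine hW ⟨fun a b hab => ?_, hz.2⟩
    obtain ⟨hadj, ha, hb⟩ := hz.1 hab
    refine ⟨hadj, ⟨ha, ?_⟩, hb, ?_⟩
    · rintro rfl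
      exact hab (hzero b)
    · rintro rfl
      exact hab (Sym2.eq_swap ▸ hzero a)
  · push Not at hzero
    obtain ⟨p, hp⟩ := hzero
    obtain ⟨htp, -, hpU⟩ := hz.1 hp
    obtain ⟨X, hX, hpX⟩ := exists_isComponentOf (G := G) (show p ∈ U \ {t} from ⟨hpU, htp.ne'⟩)
    obtain ⟨q, hqX, hqp, hq⟩ : ∃ q ∈ X, q ≠ p ∧ z s(t, q) ≠ 0 := by
      classical
      by_contra! hcon
      refine hp ?_
      rw [← sum_component_apply_eq_zero hz hX]
      exact (Finset.sum_eq_single_of_mem p (by simpa using hpX)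
        fun q hqX hqp => hcon q (by simpa using hqX) hqp).symm
    obtain ⟨y, hy, hyW, hyt⟩ := h X hX.subset hX.connected p hpX q hqX htp (hz.1 hq).1
    refine (Submodule.add_mem_iff_left W hyW).mp (ih _ (Finset.card_lt_card ?_) (add_mem hz hy) rfl)
    refine Finset.ssubset_iff_subset_ne.mpr ⟨fun w hw => ?_, fun heq => ?_⟩
    · rw [Finset.mem_filter_univ, Pi.add_apply, hyt] at hw
      rw [Finset.mem_filter_univ]
      intro hw0
      have : w ≠ p ∧ w ≠ q := ⟨fun h => hp (h ▸ hw0), fun h => hq (h ▸ hw0)⟩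
      simp [hw0, this] at hw
    · have hpmem : p ∈ Finset.univ.filter fun w => z s(t, w) ≠ 0 := by simpa using hp
      rw [← heq, Finset.mem_filter_univ, Pi.add_apply, hyt, zmod_two_eq_one_of_ne_zero hp] at hpmem
      refine hpmem ?_
      rw [Pi.add_apply, Pi.single_eq_same, Pi.single_eq_of_ne hqp.symm, add_zero]
      exact CharTwo.add_self_eq_zero 1

end Splitting

section InducedCycles

variable {V : Type*} {G : SimpleGraph V} {A A' B C C' S : Set V} {p q t v w x : V}
  {z : Sym2 V → ZMod 2}

/-- `C` is the vertex set of a chordless cycle of `G`, encoded as a connected set inducing a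
2-regular subgraph. -/
structure IsInducedCycle (G : SimpleGraph V) (C : Set V) : Prop where
  connected : (G.induce C).Connected
  ncard_neighborSet_inter : ∀ v ∈ C, (G.neighborSet v ∩ C).ncard = 2

namespace IsInducedCycle

theorem exists_neighborSet_inter_eq (hC : IsInducedCycle G C) (hv : v ∈ C) :
    ∃ p q, p ≠ q ∧ G.neighborSet v ∩ C = {p, q} :=
  Set.ncard_eq_two.mp (hC.ncard_neighborSet_inter v hv)

theorem exists_adj (hC : IsInducedCycle G C) (hv : v ∈ C) : ∃ p ∈ C, G.Adj v p := by
  obtain ⟨p, q, -, hpq⟩ := hC.exists_neighborSet_inter_eq hv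
  have hp : p ∈ G.neighborSet v ∩ C := hpq ▸ Or.inl rfl
  exact ⟨p, hp.2, hp.1⟩

theorem eq_or_eq_of_adj (hC : IsInducedCycle G C) (hv : v ∈ C) (hp : p ∈ C) (hvp : G.Adj v p)
    (hq : q ∈ C) (hvq : G.Adj v q) (hpq : p ≠ q) {u : V} (hu : u ∈ C) (hvu : G.Adj v u) :
    u = p ∨ u = q := by
  have hN : {p, q} = G.neighborSet v ∩ C := Set.eq_of_subset_of_ncard_le
    (by rintro u (rfl | rfl); exacts [⟨hvp, hp⟩, ⟨hvq, hq⟩])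
    (by rw [hC.ncard_neighborSet_inter v hv, Set.ncard_pair hpq])
    (Set.finite_of_ncard_ne_zero (by simp [hC.ncard_neighborSet_inter v hv]))
  have huN : u ∈ G.neighborSet v ∩ C := ⟨hvu, hu⟩
  rwa [← hN] at huN

theorem exists_adj_ne (hC : IsInducedCycle G C) (hv : v ∈ C) (p : V) :
    ∃ q ∈ C, G.Adj v q ∧ q ≠ p := by
  obtain ⟨q, ⟨hvq, hq⟩, hqp⟩ := Set.exists_ne_of_one_lt_ncard
    (by rw [hC.ncard_neighborSet_inter v hv]; exact one_lt_two) p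
  exact ⟨q, hq, hvq, hqp⟩

theorem edgeIndicator_ne_zero (hC : IsInducedCycle G C) : edgeIndicator G C ≠ 0 := by
  obtain ⟨v, hv⟩ := nonempty_of_connected_induce hC.connected
  obtain ⟨p, hp, hvp⟩ := hC.exists_adj hv
  exact fun h => edgeIndicator_ne_zero_iff.mpr ⟨hvp, hv, hp⟩ (congrFun h _)

section Fintype

variable [Fintype V]

theorem edgeIndicator_mem (hC : IsInducedCycle G C) : edgeIndicator G C ∈ cycleSpace G C :=
  edgeIndicator_mem_cycleSpace fun v hv => hC.ncard_neighborSet_inter v hv ▸ even_two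

theorem apply_eq_apply (hC : IsInducedCycle G C) (hz : z ∈ cycleSpace G C) (hv : v ∈ C)
    (hp : p ∈ C) (hvp : G.Adj v p) (hq : q ∈ C) (hvq : G.Adj v q) : z s(v, p) = z s(v, q) := by
  classical
  rcases eq_or_ne p q with rfl | hpq
  · rfl
  have hbz : ∑ u, z s(v, u) = 0 := congrFun (LinearMap.mem_ker.mp hz.2) v
  rw [Fintype.sum_eq_add p q hpq] at hbz
  · exact CharTwo.add_eq_zero.mp hbz
  · rintro u ⟨hup, huq⟩
    by_contra hne
    obtain ⟨hvu, -, hu⟩ := hz.1 hne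
    exact (hC.eq_or_eq_of_adj hv hp hvp hq hvq hpq hu hvu).elim hup huq

theorem eq_edgeIndicator_of_ne_zero (hC : IsInducedCycle G C) (hz : z ∈ cycleSpace G C)
    (hne : z ≠ 0) : z = edgeIndicator G C := by
  obtain ⟨⟨a, b⟩, hab⟩ := Function.ne_iff.mp hne
  obtain ⟨hadj, ha, hb⟩ := hz.1 hab
  let X := {v ∈ C | ∀ u ∈ C, G.Adj v u → z s(v, u) ≠ 0}
  have hX : X = C := by
    refine eq_of_forall_adj_mem hC.connected (Set.sep_subset _ _)
      ⟨a, ha, fun u hu hau => hC.apply_eq_apply hz ha hb hadj hu hau ▸ hab⟩ ?_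
    rintro v ⟨hv, hvz⟩ u hu hvu
    refine ⟨hu, fun u' hu' huu' => hC.apply_eq_apply hz hu hv hvu.symm hu' huu' ▸ ?_⟩
    exact Sym2.eq_swap ▸ hvz u hu hvu
  ext ⟨c, d⟩
  change z s(c, d) = edgeIndicator G C s(c, d)
  rw [edgeIndicator_apply]
  split_ifs with hcd
  · exact zmod_two_eq_one_of_ne_zero ((hX ▸ hcd.2.1 : c ∈ X).2 d hcd.2.2 hcd.1)
  · exact not_not.mp fun h => hcd (hz.1 h)

theorem eq_zero_of_ssubset (hC : IsInducedCycle G C) (hS : S ⊂ C) (hz : z ∈ cycleSpace G S) :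
    z = 0 := by
  by_contra hne
  obtain ⟨v, hv, hvS⟩ := Set.exists_of_ssubset hS
  obtain ⟨p, hp, hvp⟩ := hC.exists_adj hv
  have hvz := apply_eq_zero_of_notMem hz.1 hvS p
  rw [hC.eq_edgeIndicator_of_ne_zero (cycleSpace_mono hS.subset hz) hne] at hvz
  exact edgeIndicator_ne_zero_iff.mpr ⟨hvp, hv, hp⟩ hvz

end Fintype

variable [Finite V]

theorem eq_of_subset (hC : IsInducedCycle G C) (hC' : IsInducedCycle G C') (h : C ⊆ C') :
    C = C' := by
  cases nonempty_fintype V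
  by_contra hne
  exact hC.edgeIndicator_ne_zero
    (hC'.eq_zero_of_ssubset (Set.ssubset_iff_subset_ne.mpr ⟨h, hne⟩) hC.edgeIndicator_mem)

theorem mem_component_of_mem (hC : IsInducedCycle G C) (ht : t ∈ C)
    (hA : IsComponentOf G A (C \ {t})) (hp : p ∈ A) (htp : G.Adj t p) (hq : q ∈ C)
    (htq : G.Adj t q) : q ∈ A := by
  classical
  cases nonempty_fintype V
  by_contra hqA
  have hpC := (hA.subset hp).1
  have hpq : p ≠ q := fun h => hqA (h ▸ hp)
  have hsum := sum_component_apply_eq_zero hC.edgeIndicator_mem hA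
  rw [Finset.sum_eq_single_of_mem p (by simpa using hp)] at hsum
  · exact edgeIndicator_ne_zero_iff.mpr ⟨htp, ht, hpC⟩ hsum
  · intro u hu hup
    rw [Set.mem_toFinset] at hu
    by_contra hne
    obtain ⟨htu, -, huC⟩ := edgeIndicator_ne_zero_iff.mp hne
    rcases hC.eq_or_eq_of_adj ht hpC htp hq htq hpq huC htu with rfl | rfl
    exacts [hup rfl, hqA hu]

theorem connected_sdiff_singleton (hC : IsInducedCycle G C) (ht : t ∈ C) :
    (G.induce (C \ {t})).Connected := by
  obtain ⟨p, hp, htp⟩ := hC.exists_adj ht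
  refine connected_induce_of_forall_isComponentOf_mem ⟨hp, htp.ne'⟩ fun K hK => ?_
  obtain ⟨a, ha, b, ⟨-, rfl⟩, hab⟩ := hK.touches_of_sdiff hC.connected ⟨t, ht, Set.mem_singleton t⟩
  exact hC.mem_component_of_mem ht hK ha hab.symm hp htp

end IsInducedCycle

/-- An arc of the cycle `C` between its vertices `v` and `w`, without these ends. -/
abbrev IsArc (G : SimpleGraph V) (C : Set V) (v w : V) (A : Set V) : Prop :=
  IsComponentOf G A (C \ {v, w})

namespace IsArc

theorem symm (hA : IsArc G C v w A) : IsArc G C w v A := by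
  rwa [IsArc, Set.pair_comm]

variable [Finite V]

theorem touches_right (hA : IsArc G C v w A) (hC : IsInducedCycle G C) (hv : v ∈ C)
    (hw : w ∈ C) (hvw : v ≠ w) : Touches G A {w} := by
  rw [IsArc, Set.insert_eq, ← Set.sdiff_sdiff] at hA
  exact (hA.touches_of_sdiff (hC.connected_sdiff_singleton hv)
    ⟨w, ⟨hw, hvw.symm⟩, Set.mem_singleton w⟩).mono subset_rfl Set.inter_subset_right

theorem touches_left (hA : IsArc G C v w A) (hC : IsInducedCycle G C) (hv : v ∈ C)
    (hw : w ∈ C) (hvw : v ≠ w) : Touches G A {v} :=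
  hA.symm.touches_right hC hw hv hvw.symm

theorem mem_or_mem_of_interlaced {a b : V} {D : Set V} (hA : IsArc G C v w A)
    (hC : IsInducedCycle G C) (hB : IsArc G C v w B) (hAB : Disjoint A B) (ha : a ∈ A) (hb : b ∈ B)
    (hD : IsArc G C a b D) : v ∈ D ∨ w ∈ D := by
  by_contra! hcon
  have hab : a ≠ b := fun h => Set.disjoint_left.mp hAB ha (h ▸ hb)
  have haC := (hA.subset ha).1
  have hbC := (hB.subset hb).1
  have hconn : (G.induce (D ∪ {a} ∪ {b})).Connected := by
    refine Touches.connected_union (Touches.connected_union hD.connected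
      (connected_induce_singleton a) (hD.touches_left hC haC hbC hab))
      (connected_induce_singleton b) ?_
    exact (hD.touches_right hC haC hbC hab).mono Set.subset_union_left subset_rfl
  have hsub : D ∪ {a} ∪ {b} ⊆ C \ {v, w} := by
    rintro u ((hu | rfl) | rfl)
    · exact ⟨(hD.subset hu).1, by rintro (rfl | rfl); exacts [hcon.1 hu, hcon.2 hu]⟩
    · exact hA.subset ha
    · exact hB.subset hb
  exact Set.disjoint_left.mp hAB (hA.subset_of_connected hconn hsub
    ⟨a, Or.inl (Or.inr rfl), ha⟩ (Or.inr rfl)) hb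

end IsArc

namespace IsInducedCycle

variable [Finite V]

theorem isArc_sdiff_pair_of_adj (hC : IsInducedCycle G C) (hv : v ∈ C) (hw : w ∈ C)
    (hvw : G.Adj v w) : IsArc G C v w (C \ {v, w}) := by
  refine ⟨subset_rfl, ?_, fun _ _ _ hb _ => hb⟩
  obtain ⟨p, hp, hwp, hpv⟩ := hC.exists_adj_ne hw v
  refine connected_induce_of_forall_isComponentOf_mem (p := p)
    ⟨hp, by rintro (h | h); exacts [hpv h, hwp.ne' h]⟩ fun K hK => ?_
  obtain ⟨a, ha, b, rfl, hab⟩ := IsArc.touches_right hK hC hv hw hvw.ne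
  obtain ⟨haC, hne⟩ := hK.subset ha
  rcases hC.eq_or_eq_of_adj hw hv hvw.symm hp hwp hpv.symm haC hab.symm with rfl | rfl
  exacts [(hne (Or.inl rfl)).elim, ha]

theorem exists_isArc_isArc (hC : IsInducedCycle G C) (hv : v ∈ C) (hw : w ∈ C) (hne : v ≠ w)
    (hvw : ¬ G.Adj v w) :
    ∃ A B, IsArc G C v w A ∧ IsArc G C v w B ∧ Disjoint A B ∧ A ∪ B = C \ {v, w} := by
  classical
  cases nonempty_fintype V
  obtain ⟨p, hp, hwp⟩ := hC.exists_adj hw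
  obtain ⟨q, hq, hwq, hqp⟩ := hC.exists_adj_ne hw p
  have mem_sdiff {u : V} (hu : u ∈ C) (hwu : G.Adj w u) : u ∈ C \ {v, w} :=
    ⟨hu, by rintro (rfl | rfl); exacts [hvw hwu.symm, hwu.ne rfl]⟩
  obtain ⟨A, hA, hpA⟩ := exists_isComponentOf (G := G) (mem_sdiff hp hwp)
  obtain ⟨B, hB, hqB⟩ := exists_isComponentOf (G := G) (mem_sdiff hq hwq)
  have hqA : q ∉ A := by
    intro hqA
    have hwA : w ∉ A := fun h => (hA.subset h).2 (Or.inr rfl)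
    obtain ⟨z, hz, hzw⟩ := exists_cycle_through hA.connected hwA hpA hqA hwp hwq
    have hsub : insert w A ⊂ C := by
      refine Set.ssubset_iff_of_subset (Set.insert_subset hw fun a ha => (hA.subset ha).1) |>.mpr
        ⟨v, hv, ?_⟩
      rintro (h | h)
      exacts [hne h, (hA.subset h).2 (Or.inl rfl)]
    have hzp := hzw p
    rw [hC.eq_zero_of_ssubset hsub hz] at hzp
    simp [hqp.symm] at hzp
  refine ⟨A, B, hA, hB, ?_, (Set.union_subset hA.subset hB.subset).antisymm fun u hu => ?_⟩
  · exact (hA.eq_or_disjoint hB).resolve_left fun h => hqA (h ▸ hqB)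
  · obtain ⟨K, hK, huK⟩ := exists_isComponentOf (G := G) hu
    obtain ⟨a, ha, b, rfl, hab⟩ := IsArc.touches_right hK hC hv hw hne
    rcases hC.eq_or_eq_of_adj hw hp hwp hq hwq hqp.symm (hK.subset ha).1 hab.symm with rfl | rfl
    · exact Or.inl (hA.subset_of_connected hK.connected hK.subset ⟨a, ha, hpA⟩ huK)
    · exact Or.inr (hB.subset_of_connected hK.connected hK.subset ⟨a, ha, hqB⟩ huK)

theorem exists_isArc_isArc_mem (hC : IsInducedCycle G C) (hv : v ∈ C) (hw : w ∈ C) (hne : v ≠ w)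
    (hvw : ¬ G.Adj v w) (hx : x ∈ C \ {v, w}) :
    ∃ A B, IsArc G C v w A ∧ IsArc G C v w B ∧ Disjoint A B ∧ A ∪ B = C \ {v, w} ∧ x ∈ A := by
  obtain ⟨A, B, hA, hB, hAB, hunion⟩ := hC.exists_isArc_isArc hv hw hne hvw
  rcases hunion.ge hx with hxA | hxB
  · exact ⟨A, B, hA, hB, hAB, hunion, hxA⟩
  · exact ⟨B, A, hB, hA, hAB.symm, Set.union_comm A B ▸ hunion, hxB⟩

end IsInducedCycle

end InducedCycles

section ThreeConnected

variable {V : Type*} {G : SimpleGraph V} {K U X : Set V} {p q r t t₁ t₂ t₃ : V}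
  {W : Submodule (ZMod 2) (Sym2 V → ZMod 2)}

/-- A peripheral cycle: chordless, and its removal leaves a connected graph. In a 3-connected
planar graph these are the face boundaries. -/
structure IsPeripheral (G : SimpleGraph V) (C : Set V) : Prop extends IsInducedCycle G C where
  connected_compl : (G.induce Cᶜ).Connected

/-- The span of the peripheral cycles of `G` within `U`. -/
noncomputable def peripheralSpan (G : SimpleGraph V) (U : Set V) :
    Submodule (ZMod 2) (Sym2 V → ZMod 2) :=
  Submodule.span (ZMod 2) (edgeIndicator G '' {C | IsPeripheral G C ∧ C ⊆ U})

theorem peripheralSpan_mono {U U' : Set V} (h : U ⊆ U') :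
    peripheralSpan G U ≤ peripheralSpan G U' :=
  Submodule.span_mono (Set.image_mono fun _ hC => ⟨hC.1, hC.2.trans h⟩)

theorem IsPeripheral.edgeIndicator_mem_peripheralSpan {C : Set V} (hC : IsPeripheral G C)
    (hCU : C ⊆ U) : edgeIndicator G C ∈ peripheralSpan G U :=
  Submodule.subset_span ⟨C, ⟨hC, hCU⟩, rfl⟩

theorem ncard_pair_le_two (x y : V) : ({x, y} : Set V).ncard ≤ 2 :=
  (Set.ncard_insert_le x {y}).trans (by rw [Set.ncard_singleton])

variable [Fintype V]

section IsLinked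

variable [DecidableEq V]

theorem IsLinked.of_attachments (hW₂ : cycleSpace G (U \ {t₂}) ≤ W)
    (hW₃ : cycleSpace G (U \ {t₃}) ≤ W) (hK : (G.induce K).Connected)
    (hX : (G.induce X).Connected) (hKX : K ⊆ X) (hXU : X ⊆ U \ {t}) (ht : t ∈ U)
    (htt₂ : t ≠ t₂) (htt₃ : t ≠ t₃) (h₂₃ : t₂ ≠ t₃) (ht₂ : t₂ ∉ K) (ht₃ : t₃ ∉ K)
    (hK₂ : Touches G K {t₂}) (hK₃ : Touches G K {t₃}) (hp : p ∈ X) (hq : q ∈ K)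
    (htp : G.Adj t p) (htq : G.Adj t q) : IsLinked G W U t p q := by
  by_cases ht₂X : t₂ ∈ X
  swap
  · exact .of_connected hW₂ hX hXU ht₂X ht htt₂ hp (hKX hq) htp htq
  have hK₂conn : (G.induce (K ∪ {t₂})).Connected :=
    Touches.connected_union hK (connected_induce_singleton t₂) hK₂
  have hK₂X : K ∪ {t₂} ⊆ X := Set.union_subset hKX (Set.singleton_subset_iff.mpr ht₂X)
  have ht₃K₂ : t₃ ∉ K ∪ {t₂} := by
    rintro (h | h)
    exacts [ht₃ h, h₂₃ h.symm]
  rcases eq_or_ne p t₂ with rfl | hpt₂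
  · exact .of_connected hW₃ hK₂conn (hK₂X.trans hXU) ht₃K₂ ht htt₃ (Or.inr rfl) (Or.inl hq)
      htp htq
  obtain ⟨D, hD, hpD⟩ := exists_isComponentOf (G := G) (show p ∈ X \ {t₂} from ⟨hp, hpt₂⟩)
  have hDX : D ⊆ X := hD.subset.trans Set.sdiff_subset
  have hKX₂ : K ⊆ X \ {t₂} := fun v hv => ⟨hKX hv, by rintro rfl; exact ht₂ hv⟩
  by_cases hne : (K ∩ D).Nonempty
  · exact .of_connected hW₂ hD.connected (hDX.trans hXU) (fun h => (hD.subset h).2 rfl) ht htt₂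
      hpD (hD.subset_of_connected hK hKX₂ hne hq) htp htq
  · obtain ⟨k₃, hk₃, hk₃t⟩ := touches_singleton_right.mp hK₃
    have ht₃D : t₃ ∉ D := fun h => hne ⟨k₃, hk₃, hD.mem_of_adj t₃ h k₃ (hKX₂ hk₃) hk₃t.symm⟩
    have hDK₂ : (G.induce (D ∪ (K ∪ {t₂}))).Connected :=
      Touches.connected_union hD.connected hK₂conn
        ((hD.touches_of_sdiff hX ⟨t₂, ht₂X, Set.mem_singleton t₂⟩).mono subset_rfl
          (Set.inter_subset_right.trans Set.subset_union_right))
    exact .of_connected hW₃ hDK₂ ((Set.union_subset hDX hK₂X).trans hXU)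
      (fun h => h.elim ht₃D ht₃K₂) ht htt₃ (Or.inl hpD) (Or.inr (Or.inl hq)) htp htq

theorem eq_sdiff_singleton_of_not_isLinked (hW : ∀ s ∈ U, cycleSpace G (U \ {s}) ≤ W)
    (ht : t ∈ U) (hX : (G.induce X).Connected) (hXU : X ⊆ U \ {t}) (hp : p ∈ X) (hq : q ∈ X)
    (htp : G.Adj t p) (htq : G.Adj t q) (hpq : ¬ IsLinked G W U t p q) : X = U \ {t} := by
  by_contra hne
  obtain ⟨s, hs, hsX⟩ := Set.exists_of_ssubset (Set.ssubset_iff_subset_ne.mpr ⟨hXU, hne⟩)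
  exact hpq (.of_connected (hW s hs.1) hX hXU hsX ht (fun h => hs.2 h.symm) hp hq htp htq)

theorem isLinked_or_isLinked (hW : ∀ s ∈ U, cycleSpace G (U \ {s}) ≤ W)
    (hU : (G.induce (U \ {t})).Connected) (ht : t ∈ U) (hp : p ∈ U) (hq : q ∈ U) (hr : r ∈ U)
    (htp : G.Adj t p) (htq : G.Adj t q) (htr : G.Adj t r) (hpr : p ≠ r) (hqr : q ≠ r) :
    IsLinked G W U t p q ∨ IsLinked G W U t p r := by
  have hr' : r ∈ U \ {t} := ⟨hr, htr.ne'⟩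
  obtain ⟨D, hD, hpD⟩ := exists_isComponentOf (G := G)
    (show p ∈ (U \ {t}) \ {r} from ⟨⟨hp, htp.ne'⟩, hpr⟩)
  have hDU : D ⊆ U \ {t} := hD.subset.trans Set.sdiff_subset
  by_cases hqD : q ∈ D
  · exact Or.inl (.of_connected (hW r hr) hD.connected hDU (fun h => (hD.subset h).2 rfl) ht
      htr.ne hpD hqD htp htq)
  · have hDr : (G.induce (D ∪ {r})).Connected := Touches.connected_union hD.connected
      (connected_induce_singleton r)
      ((hD.touches_of_sdiff hU ⟨r, hr', Set.mem_singleton r⟩).mono subset_rfl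
        Set.inter_subset_right)
    have hqDr : q ∉ D ∪ {r} := by
      rintro (h | h)
      exacts [hqD h, hqr h]
    exact Or.inr (.of_connected (hW q hq) hDr (Set.union_subset hDU
      (Set.singleton_subset_iff.mpr hr')) hqDr ht htq.ne (Or.inl hpD) (Or.inr rfl) htp htr)

theorem neighborSet_inter_eq_pair_of_not_isLinked (hW : ∀ s ∈ U, cycleSpace G (U \ {s}) ≤ W)
    (hU : (G.induce (U \ {t})).Connected) (ht : t ∈ U) (hp : p ∈ U) (hq : q ∈ U)
    (htp : G.Adj t p) (htq : G.Adj t q) (hpq : ¬ IsLinked G W U t p q) :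
    G.neighborSet t ∩ U = {p, q} := by
  refine Set.Subset.antisymm ?_ (Set.insert_subset ⟨htp, hp⟩
    (Set.singleton_subset_iff.mpr ⟨htq, hq⟩))
  rintro r ⟨htr, hr⟩
  by_contra! hne
  simp only [Set.mem_insert_iff, Set.mem_singleton_iff, not_or] at hne
  obtain ⟨hrp, hrq⟩ : r ≠ p ∧ r ≠ q := hne
  have hpr := (isLinked_or_isLinked hW hU ht hp hq hr htp htq htr hrp.symm hrq.symm).resolve_left
    hpq
  have hqr := (isLinked_or_isLinked hW hU ht hq hp hr htq htp htr hrq.symm hrp.symm).resolve_left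
    fun h => hpq h.symm
  exact hpq (hpr.trans hqr.symm)

end IsLinked

theorem cycleSpace_le_of_three_attachments (hK : (G.induce K).Connected) (hKU : K ⊆ U)
    (ht₁ : t₁ ∈ U \ K) (ht₂ : t₂ ∉ K) (ht₃ : t₃ ∉ K) (h₁₂ : t₁ ≠ t₂) (h₁₃ : t₁ ≠ t₃)
    (h₂₃ : t₂ ≠ t₃) (hK₁ : Touches G K {t₁}) (hK₂ : Touches G K {t₂}) (hK₃ : Touches G K {t₃})
    (hW₁ : cycleSpace G (U \ {t₁}) ≤ W) (hW₂ : cycleSpace G (U \ {t₂}) ≤ W)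
    (hW₃ : cycleSpace G (U \ {t₃}) ≤ W) : cycleSpace G U ≤ W := by
  classical
  obtain ⟨k, hk, hkt₁⟩ := touches_singleton_right.mp hK₁
  have hKt₁ : K ⊆ U \ {t₁} := fun v hv => ⟨hKU hv, by rintro rfl; exact ht₁.2 hv⟩
  refine cycleSpace_le_of_isLinked hW₁ fun X hXU hX p hp q hq htp htq => ?_
  by_cases ht₂X : t₂ ∈ X
  · have hXK : (G.induce (X ∪ K)).Connected := Touches.connected_union hX hK
      (hK₂.symm.mono (Set.singleton_subset_iff.mpr ht₂X) subset_rfl)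
    have linked {u : V} (hu : u ∈ X) (htu : G.Adj t₁ u) : IsLinked G W U t₁ u k :=
      .of_attachments hW₂ hW₃ hK hXK Set.subset_union_right (Set.union_subset hXU hKt₁) ht₁.1
        h₁₂ h₁₃ h₂₃ ht₂ ht₃ hK₂ hK₃ (Or.inl hu) hk htu hkt₁.symm
    exact (linked hp htp).trans (linked hq htq).symm
  · exact .of_connected hW₂ hX hXU ht₂X ht₁.1 h₁₂ hp hq htp htq

theorem connected_sdiff_singleton_and_exists_neighborSet_inter_eq
    (hW : ∀ t ∈ U, cycleSpace G (U \ {t}) ≤ W) (hU : ¬ cycleSpace G U ≤ W) (ht : t ∈ U) :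
    (G.induce (U \ {t})).Connected ∧ ∃ p q, p ≠ q ∧ G.neighborSet t ∩ U = {p, q} := by
  classical
  obtain ⟨X, hXU, hX, p, hp, q, hq, htp, htq, hpq⟩ : ∃ X ⊆ U \ {t}, (G.induce X).Connected ∧
      ∃ p ∈ X, ∃ q ∈ X, G.Adj t p ∧ G.Adj t q ∧ ¬ IsLinked G W U t p q := by
    by_contra! hcon
    exact hU (cycleSpace_le_of_isLinked (hW t ht) hcon)
  obtain rfl := eq_sdiff_singleton_of_not_isLinked hW ht hX hXU hp hq htp htq hpq
  exact ⟨hX, p, q, fun h => hpq (h ▸ .refl t p),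
    neighborSet_inter_eq_pair_of_not_isLinked hW hX ht hp.1 hq.1 htp htq hpq⟩

theorem isInducedCycle_of_forall_cycleSpace_sdiff_le
    (hW : ∀ t ∈ U, cycleSpace G (U \ {t}) ≤ W) (hU : ¬ cycleSpace G U ≤ W) :
    IsInducedCycle G U := by
  have key {t : V} (ht : t ∈ U) :=
    connected_sdiff_singleton_and_exists_neighborSet_inter_eq hW hU ht
  refine ⟨?_, fun t ht => Set.ncard_eq_two.mpr (key ht).2⟩
  obtain ⟨t, ht⟩ : U.Nonempty := by
    by_contra! hempty
    refine hU fun z hz => ?_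
    obtain rfl : z = 0 := funext fun e => by
      induction e with
      | h a b => exact apply_eq_zero_of_notMem hz.1 (by simp [hempty]) b
    exact zero_mem W
  obtain ⟨hconn, p, q, -, hN⟩ := key ht
  obtain ⟨htp, hpU⟩ : p ∈ G.neighborSet t ∩ U := hN ▸ Or.inl rfl
  have := Touches.connected_union hconn (connected_induce_singleton t)
    ⟨p, ⟨hpU, htp.ne'⟩, t, rfl, htp.symm⟩
  rwa [Set.sdiff_union_of_subset (Set.singleton_subset_iff.mpr ht)] at this

/-- A finite graph is 3-connected if it has more than three vertices and removing fewer than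
three of them never disconnects it. -/
structure IsThreeConnected (G : SimpleGraph V) : Prop where
  three_lt_card : 3 < Fintype.card V
  connected_compl : ∀ S : Set V, S.ncard < 3 → (G.induce Sᶜ).Connected

namespace IsThreeConnected

theorem connected_compl_pair (hG : IsThreeConnected G) (x y : V) :
    (G.induce {x, y}ᶜ).Connected :=
  hG.connected_compl _ (Nat.lt_succ_of_le (ncard_pair_le_two x y))

theorem three_le_ncard_neighborSet (hG : IsThreeConnected G) (v : V) :
    3 ≤ (G.neighborSet v).ncard := by
  by_contra! hlt
  have hv : {v} = (G.neighborSet v)ᶜ := eq_of_forall_adj_mem (hG.connected_compl _ hlt)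
    (by simp) (Set.singleton_nonempty v) (by rintro _ rfl b hb hvb; exact (hb hvb).elim)
  have hcard := Set.ncard_add_ncard_compl (G.neighborSet v)
  rw [← hv, Set.ncard_singleton, Nat.card_eq_fintype_card] at hcard
  have := hG.three_lt_card
  lia

theorem exists_three_attachments (hG : IsThreeConnected G) (hK : K.Nonempty) {o : V} (ho : o ∉ K)
    (hKo : ¬ Touches G K {o}) : ∃ t₁ t₂ t₃, t₁ ≠ t₂ ∧ t₁ ≠ t₃ ∧ t₂ ≠ t₃ ∧
      ∀ t ∈ ({t₁, t₂, t₃} : Set V), t ∉ K ∧ Touches G K {t} := by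
  let T : Set V := {t | t ∉ K ∧ Touches G K {t}}
  have hT : 2 < T.ncard := by
    by_contra! hle
    have hKT : K = Tᶜ := eq_of_forall_adj_mem (hG.connected_compl T (Nat.lt_succ_of_le hle))
      (fun k hk hkT => hkT.1 hk) hK fun a ha b hb hab => by
        by_contra hbK
        exact hb ⟨hbK, a, ha, b, rfl, hab⟩
    exact ho (hKT ▸ fun hoT => hKo hoT.2)
  obtain ⟨t₁, t₂, t₃, ht₁, ht₂, ht₃, h₁₂, h₁₃, h₂₃⟩ := (Set.two_lt_ncard_iff).mp hT
  exact ⟨t₁, t₂, t₃, h₁₂, h₁₃, h₂₃, by rintro _ (rfl | rfl | rfl) <;> assumption⟩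

theorem exists_three_boundary_attachments (hG : IsThreeConnected G)
    (hU : (G.induce Uᶜ).Connected) {u : V} (hu : u ∈ U) (huU : ¬ Touches G {u} Uᶜ) :
    ∃ K ⊆ U, (G.induce K).Connected ∧ ∃ t₁ t₂ t₃, t₁ ≠ t₂ ∧ t₁ ≠ t₃ ∧ t₂ ≠ t₃ ∧
      ∀ t ∈ ({t₁, t₂, t₃} : Set V), t ∈ U \ K ∧ Touches G K {t} ∧ Touches G {t} Uᶜ := by
  obtain ⟨o, ho⟩ := nonempty_of_connected_induce hU
  obtain ⟨K, hK, huK⟩ := exists_isComponentOf (G := G)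
    (show u ∈ U \ {t | Touches G {t} Uᶜ} from ⟨hu, huU⟩)
  have hKU : ¬ Touches G K Uᶜ := fun ⟨k, hk, b, hb, hkb⟩ =>
    (hK.subset hk).2 ⟨k, rfl, b, hb, hkb⟩
  have hKnot {b : V} (hb : b ∉ U) : ¬ Touches G K {b} := fun h =>
    hKU (h.mono subset_rfl (Set.singleton_subset_iff.mpr hb))
  obtain ⟨t₁, t₂, t₃, h₁₂, h₁₃, h₂₃, ht⟩ := hG.exists_three_attachments ⟨u, huK⟩
    (fun h => ho (hK.subset h).1) (hKnot ho)
  refine ⟨K, hK.subset.trans Set.sdiff_subset, hK.connected, t₁, t₂, t₃, h₁₂, h₁₃, h₂₃,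
    fun t htt => ?_⟩
  obtain ⟨htK, hKt⟩ := ht t htt
  have htU : t ∈ U := not_not.mp fun h => hKnot h hKt
  refine ⟨⟨htU, htK⟩, hKt, ?_⟩
  by_contra htT
  obtain ⟨k, hk, hkt⟩ := touches_singleton_right.mp hKt
  exact htK (hK.mem_of_adj k hk t ⟨htU, htT⟩ hkt)

theorem cycleSpace_le_peripheralSpan_of_connected_compl (hG : IsThreeConnected G) (U : Set V)
    (hU : (G.induce Uᶜ).Connected) : cycleSpace G U ≤ peripheralSpan G U := by
  induction U using WellFoundedLT.induction with
  | ind U ih =>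
  have sdiff_le {t : V} (ht : t ∈ U) (htU : Touches G {t} Uᶜ) :
      cycleSpace G (U \ {t}) ≤ peripheralSpan G U := by
    refine (ih (U \ {t}) (by simpa using ht) ?_).trans (peripheralSpan_mono Set.sdiff_subset)
    rw [Set.compl_sdiff]
    exact Touches.connected_union (connected_induce_singleton t) hU htU
  by_cases hinner : ∃ u ∈ U, ¬ Touches G {u} Uᶜ
  · obtain ⟨u, hu, huU⟩ := hinner
    obtain ⟨K, hKU, hK, t₁, t₂, t₃, h₁₂, h₁₃, h₂₃, ht⟩ :=
      hG.exists_three_boundary_attachments hU hu huU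
    simp only [Set.forall_mem_insert, Set.mem_singleton_iff, forall_eq] at ht
    obtain ⟨⟨ht₁, hK₁, ht₁U⟩, ⟨ht₂, hK₂, ht₂U⟩, ht₃, hK₃, ht₃U⟩ := ht
    exact cycleSpace_le_of_three_attachments hK hKU ht₁ ht₂.2 ht₃.2 h₁₂ h₁₃ h₂₃ hK₁ hK₂ hK₃
      (sdiff_le ht₁.1 ht₁U) (sdiff_le ht₂.1 ht₂U) (sdiff_le ht₃.1 ht₃U)
  · push Not at hinner
    by_contra hle
    have hC : IsPeripheral G U := ⟨isInducedCycle_of_forall_cycleSpace_sdiff_le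
      (fun t ht => sdiff_le ht (hinner t ht)) hle, hU⟩
    refine hle fun z hz => ?_
    rcases eq_or_ne z 0 with rfl | hne
    · exact zero_mem _
    · exact hC.eq_edgeIndicator_of_ne_zero hz hne ▸ hC.edgeIndicator_mem_peripheralSpan subset_rfl

theorem cycleSpace_le_peripheralSpan_compl_singleton (hG : IsThreeConnected G) (v : V) :
    cycleSpace G {v}ᶜ ≤ peripheralSpan G {v}ᶜ :=
  hG.cycleSpace_le_peripheralSpan_of_connected_compl _ (by
    rw [compl_compl]
    exact connected_induce_singleton v)

theorem cycleSpace_le_peripheralSpan (hG : IsThreeConnected G) :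
    cycleSpace G Set.univ ≤ peripheralSpan G Set.univ := by
  classical
  have hle (v : V) : cycleSpace G (Set.univ \ {v}) ≤ peripheralSpan G Set.univ := by
    rw [← Set.compl_eq_univ_sdiff]
    exact (hG.cycleSpace_le_peripheralSpan_compl_singleton v).trans
      (peripheralSpan_mono (Set.subset_univ _))
  obtain ⟨t⟩ : Nonempty V := Fintype.card_pos_iff.mp (by have := hG.three_lt_card; lia)
  refine cycleSpace_le_of_isLinked (hle t) fun _ _ _ p _ q _ htp htq => ?_
  obtain ⟨t', ht'⟩ : ∃ t', t' ∉ ({t, p, q} : Set V) := by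
    by_contra! hall
    have := hG.three_lt_card
    have h3 : ({t, p, q} : Set V).ncard ≤ 3 :=
      (Set.ncard_insert_le _ _).trans (Nat.succ_le_succ (ncard_pair_le_two p q))
    rw [Set.eq_univ_of_forall hall, Set.ncard_univ, Nat.card_eq_fintype_card] at h3
    lia
  simp only [Set.mem_insert_iff, Set.mem_singleton_iff, not_or] at ht'
  have mem {a : V} (hta : G.Adj t a) (ha : t' ≠ a) : a ∈ ({t, t'} : Set V)ᶜ := by
    rintro (rfl | rfl)
    exacts [hta.ne rfl, ha rfl]
  exact .of_connected (hle t') (hG.connected_compl_pair t t')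
    (fun v hv => ⟨trivial, fun h => hv (Or.inl h)⟩) (fun h => h (Or.inr rfl)) trivial
    (Ne.symm ht'.1) (mem htp ht'.2.1) (mem htq ht'.2.2) htp htq

theorem exists_isPeripheral_notMem (hG : IsThreeConnected G) {x y v : V} (hxy : G.Adj x y)
    (hvx : v ≠ x) (hvy : v ≠ y) : ∃ C, IsPeripheral G C ∧ x ∈ C ∧ y ∈ C ∧ v ∉ C := by
  classical
  obtain ⟨x', hxx', hx'⟩ : ∃ x' ∈ G.neighborSet x, x' ∉ ({y, v} : Set V) :=
    Set.exists_mem_notMem_of_ncard_lt_ncard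
      ((ncard_pair_le_two y v).trans_lt (hG.three_le_ncard_neighborSet x))
  simp only [Set.mem_insert_iff, Set.mem_singleton_iff, not_or] at hx'
  obtain ⟨z, hz, hzx⟩ := exists_cycle_through (hG.connected_compl_pair x v) (p := x') (q := y)
    (t := x) (by simp) (by simp [hx'.2, (show x' ≠ x from hxx'.ne')])
    (by simp [hxy.ne', hvy.symm]) hxx' hxy
  have hzW : z ∈ peripheralSpan G {v}ᶜ :=
    hG.cycleSpace_le_peripheralSpan_compl_singleton v (cycleSpace_mono (by
      rintro u (rfl | hu)
      exacts [hvx.symm, fun h => hu (Or.inr h)]) hz)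
  by_contra! hcon
  have hle : peripheralSpan G {v}ᶜ ≤ LinearMap.ker (LinearMap.proj (R := ZMod 2) s(x, y)) := by
    refine Submodule.span_le.mpr ?_
    rintro _ ⟨C, ⟨hC, hCv⟩, rfl⟩
    by_contra hne
    obtain ⟨-, hx, hy⟩ := edgeIndicator_ne_zero_iff.mp hne
    exact hCv (hcon C hC hx hy) rfl
  have hzxy : z s(x, y) = 0 := hle hzW
  rw [hzx] at hzxy
  simp [Ne.symm hx'.1] at hzxy

end IsThreeConnected

end ThreeConnected

section FacialCycles

variable {V : Type*} {G : SimpleGraph V} {A B C C' K L : Set V} {s v w x y z : V}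

theorem pairwise_vecCons {α : Type*} {n : ℕ} {r : α → α → Prop} [Std.Symm r] {a : α} {f : Fin n → α}
    (ha : ∀ i, r a (f i)) (hf : Pairwise fun i j => r (f i) (f j)) :
    Pairwise fun i j => r (Matrix.vecCons a f i) (Matrix.vecCons a f j) :=
  have : Std.Symm fun i j => r (Matrix.vecCons a f i) (Matrix.vecCons a f j) :=
    ⟨fun _ _ h => symm_of r h⟩
  pairwise_fin_succ_iff_of_isSymm.mpr ⟨ha, hf⟩

theorem pairwise_disjoint_vec_three {A B C : Set V} (hAB : Disjoint A B) (hAC : Disjoint A C)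
    (hBC : Disjoint B C) : Pairwise fun i j => Disjoint (![A, B, C] i) (![A, B, C] j) :=
  pairwise_vecCons (r := Disjoint) (Fin.forall_fin_two.mpr ⟨hAB, hAC⟩)
    (pairwise_vecCons (Fin.forall_fin_one.mpr hBC) Subsingleton.pairwise)

theorem not_isPlanar_of_complete {A : Fin 5 → Set V} (hA : ∀ i, (G.induce (A i)).Connected)
    (hdisj : Pairwise fun i j => Disjoint (A i) (A j))
    (htouch : Pairwise fun i j => Touches G (A i) (A j)) : ¬ G.IsPlanar :=
  fun hG => hG.1 ⟨A, hA, hdisj, fun _ _ hij => htouch hij⟩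

theorem not_isPlanar_of_bipartite {A B : Fin 3 → Set V}
    (hA : ∀ i, (G.induce (A i)).Connected) (hB : ∀ i, (G.induce (B i)).Connected)
    (hAA : Pairwise fun i j => Disjoint (A i) (A j))
    (hBB : Pairwise fun i j => Disjoint (B i) (B j)) (hAB : ∀ i j, Disjoint (A i) (B j))
    (htouch : ∀ i j, Touches G (A i) (B j)) : ¬ G.IsPlanar := by
  refine fun hG => hG.2 ⟨Sum.elim A B, Sum.rec hA hB, ?_, ?_⟩
  · rintro (i | i) (j | j) hij
    · exact hAA (by simpa using hij)
    · exact hAB i j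
    · exact (hAB j i).symm
    · exact hBB (by simpa using hij)
  · rintro (i | i) (j | j) hij
    · simp at hij
    · exact htouch i j
    · exact (htouch j i).symm
    · simp at hij

/-- Three disjoint connected sets, each next to both of the further vertices `x` and `y`: a
model of `K₂,₃`. -/
structure IsTheta (G : SimpleGraph V) (x y : V) (P : Fin 3 → Set V) : Prop where
  ne : x ≠ y
  connected : ∀ i, (G.induce (P i)).Connected
  disjoint : Pairwise fun i j => Disjoint (P i) (P j)
  left_notMem : ∀ i, x ∉ P i
  right_notMem : ∀ i, y ∉ P i
  touches_left : ∀ i, Touches G {x} (P i)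
  touches_right : ∀ i, Touches G {y} (P i)

theorem IsTheta.not_isPlanar_of_hub {P : Fin 3 → Set V} (hP : IsTheta G x y P)
    (hK : (G.induce K).Connected) (hxK : x ∉ K) (hyK : y ∉ K) (hKP : ∀ i, Disjoint K (P i))
    (hKtouch : ∀ i, Touches G K (P i)) : ¬ G.IsPlanar := by
  refine not_isPlanar_of_bipartite (A := ![{x}, {y}, K]) ?_ hP.connected
    (pairwise_disjoint_vec_three (Set.disjoint_singleton.mpr hP.ne)
      (Set.disjoint_singleton_left.mpr hxK) (Set.disjoint_singleton_left.mpr hyK)) hP.disjoint ?_ ?_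
  · simp [Fin.forall_fin_succ, hK]
  · simp [Fin.forall_fin_succ (n := 2), Fin.forall_fin_two, hP.left_notMem, hP.right_notMem, hKP]
  · simp [Fin.forall_fin_succ (n := 2), Fin.forall_fin_two, hP.touches_left, hP.touches_right,
      hKtouch]

theorem IsTheta.not_isPlanar_of_adj {P : Fin 3 → Set V} (hP : IsTheta G x y P) (hxy : G.Adj x y)
    (htouch : Pairwise fun i j => Touches G (P i) (P j)) : ¬ G.IsPlanar :=
  have : Std.Symm (Touches G) := ⟨fun _ _ => Touches.symm⟩
  not_isPlanar_of_complete (A := Matrix.vecCons {x} (Matrix.vecCons {y} P))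
    (Fin.cases (connected_induce_singleton x)
      (Fin.cases (connected_induce_singleton y) hP.connected))
    (pairwise_vecCons (r := Disjoint)
      (Fin.cases (Set.disjoint_singleton.mpr hP.ne) fun i =>
        Set.disjoint_singleton_left.mpr (hP.left_notMem i))
      (pairwise_vecCons (fun i => Set.disjoint_singleton_left.mpr (hP.right_notMem i)) hP.disjoint))
    (pairwise_vecCons (r := Touches G) (Fin.cases ⟨x, rfl, y, rfl, hxy⟩ hP.touches_left)
      (pairwise_vecCons hP.touches_right htouch))

theorem exists_link {S P Q M : Set V} (hS : (G.induce S).Connected)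
    (hP : (G.induce P).Connected) (hQ : (G.induce Q).Connected) (hPQ : Disjoint P Q)
    (hPS : P ⊆ S) (hQS : Q ⊆ S) (hM : S \ (P ∪ Q) = M) :
    ∃ L ⊆ M, (G.induce (P ∪ L)).Connected ∧ Touches G (P ∪ L) Q ∧
      (L = ∅ ∨ IsComponentOf G L M ∧ Touches G L P ∧ Touches G L Q) := by
  by_cases h : Touches G P Q
  · exact ⟨∅, Set.empty_subset M, by rwa [Set.union_empty], by rwa [Set.union_empty], .inl rfl⟩
  obtain ⟨L, hL, hLP, hLQ⟩ := exists_isComponentOf_touches_touches hS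
    (nonempty_of_connected_induce hP) (nonempty_of_connected_induce hQ) hPS hQS hPQ h
  rw [hM] at hL
  exact ⟨L, hL.subset, Touches.connected_union hP hL.connected hLP.symm,
    hLQ.mono Set.subset_union_right subset_rfl, .inr ⟨hL, hLP, hLQ⟩⟩

theorem IsTheta.pairwise_disjoint_links {P L : Fin 3 → Set V} {M : Set V} (hP : IsTheta G x y P)
    (hG : G.IsPlanar) (hxM : x ∉ M) (hyM : y ∉ M) (hPM : ∀ i, Disjoint (P i) M)
    (hL : ∀ i, L i = ∅ ∨ IsComponentOf G (L i) M ∧ Touches G (L i) (P i) ∧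
      Touches G (L i) (P (i + 1))) : Pairwise fun i j => Disjoint (L i) (L j) := by
  intro i j hij
  rcases hL i with hi | ⟨hi, hi₁, hi₂⟩
  · simp [hi]
  rcases hL j with hj | ⟨hj, hj₁, hj₂⟩
  · simp [hj]
  refine (hi.eq_or_disjoint hj).resolve_left fun h => ?_
  refine hP.not_isPlanar_of_hub hi.connected (fun h => hxM (hi.subset h))
    (fun h => hyM (hi.subset h)) (fun k => ((hPM k).mono_right hi.subset).symm) (fun k => ?_) hG
  have hk : k = i ∨ k = i + 1 ∨ k = j ∨ k = j + 1 := by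
    clear * - hij
    decide +revert
  rcases hk with rfl | rfl | rfl | rfl
  exacts [hi₁, hi₂, h ▸ hj₁, h ▸ hj₂]

theorem IsTheta.not_isPlanar_of_links {P L : Fin 3 → Set V} {M : Set V} (hP : IsTheta G x y P)
    (hxy : G.Adj x y) (hxM : x ∉ M) (hyM : y ∉ M) (hPM : ∀ i, Disjoint (P i) M)
    (hLM : ∀ i, L i ⊆ M) (hconn : ∀ i, (G.induce (P i ∪ L i)).Connected)
    (htouch : ∀ i, Touches G (P i ∪ L i) (P (i + 1)))
    (hL : ∀ i, L i = ∅ ∨ IsComponentOf G (L i) M ∧ Touches G (L i) (P i) ∧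
      Touches G (L i) (P (i + 1))) : ¬ G.IsPlanar := by
  intro hG
  have hTheta : IsTheta G x y fun i => P i ∪ L i :=
    { ne := hP.ne
      connected := hconn
      disjoint := fun i j hij => Set.disjoint_union_left.mpr
        ⟨Set.disjoint_union_right.mpr ⟨hP.disjoint hij, (hPM i).mono_right (hLM j)⟩,
          Set.disjoint_union_right.mpr ⟨((hPM j).mono_right (hLM i)).symm,
            hP.pairwise_disjoint_links hG hxM hyM hPM hL hij⟩⟩
      left_notMem := fun i h => h.elim (hP.left_notMem i) fun h => hxM (hLM i h)
      right_notMem := fun i h => h.elim (hP.right_notMem i) fun h => hyM (hLM i h)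
      touches_left := fun i => (hP.touches_left i).mono subset_rfl Set.subset_union_left
      touches_right := fun i => (hP.touches_right i).mono subset_rfl Set.subset_union_left }
  refine hTheta.not_isPlanar_of_adj hxy (fun i j hij => ?_) hG
  have hnext : j = i + 1 ∨ i = j + 1 := by
    clear * - hij
    decide +revert
  rcases hnext with rfl | rfl
  · exact (htouch i).mono subset_rfl Set.subset_union_left
  · exact ((htouch j).mono subset_rfl Set.subset_union_left).symm

theorem IsComponentOf.not_touches {S : Set V} (hA : IsComponentOf G A S) (hB : B ⊆ S)
    (hAB : Disjoint A B) : ¬ Touches G A B :=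
  fun ⟨a, ha, b, hb, hab⟩ => Set.disjoint_left.mp hAB (hA.mem_of_adj a ha b (hB hb) hab) hb

section Finite

variable [Finite V]

theorem isTheta_of_isArc (hC : IsInducedCycle G C) (hw : w ∈ C) (hz : z ∈ C) (hne : w ≠ z)
    (hA : IsArc G C w z A) (hB : IsArc G C w z B) (hAB : Disjoint A B)
    (hK : (G.induce K).Connected) (hKC : Disjoint K C) (hKw : Touches G K {w})
    (hKz : Touches G K {z}) : IsTheta G w z ![A, B, K] := by
  have hAC : A ⊆ C := hA.subset.trans Set.sdiff_subset
  have hBC : B ⊆ C := hB.subset.trans Set.sdiff_subset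
  refine ⟨hne, ?_, pairwise_disjoint_vec_three hAB (hKC.symm.mono_left hAC)
    (hKC.symm.mono_left hBC), ?_, ?_, ?_, ?_⟩
  all_goals simp only [Fin.forall_fin_succ, IsEmpty.forall_iff, and_true, Matrix.cons_val_zero,
    Matrix.cons_val_succ]
  · exact ⟨hA.connected, hB.connected, hK⟩
  · exact ⟨fun h => (hA.subset h).2 (.inl rfl), fun h => (hB.subset h).2 (.inl rfl),
      fun h => Set.disjoint_left.mp hKC h hw⟩
  · exact ⟨fun h => (hA.subset h).2 (.inr rfl), fun h => (hB.subset h).2 (.inr rfl),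
      fun h => Set.disjoint_left.mp hKC h hz⟩
  · exact ⟨(hA.touches_left hC hw hz hne).symm, (hB.touches_left hC hw hz hne).symm, hKw.symm⟩
  · exact ⟨(hA.touches_right hC hw hz hne).symm, (hB.touches_right hC hw hz hne).symm, hKz.symm⟩

theorem not_isPlanar_of_isArc_touches (hC : IsPeripheral G C) (hw : w ∈ C) (hz : z ∈ C)
    (hne : w ≠ z) (hA : IsArc G C w z A) (hB : IsArc G C w z B) (hAB : Disjoint A B)
    (hK : (G.induce K).Connected) (hKC : Disjoint K C) (hKw : Touches G K {w})
    (hKz : Touches G K {z}) (hL : (G.induce L).Connected) (hLC : L ⊆ Cᶜ \ K)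
    (hLA : Touches G L A) (hLB : Touches G L B) : ¬ G.IsPlanar := by
  obtain ⟨l, hl⟩ := nonempty_of_connected_induce hL
  obtain ⟨M, hM, hlM⟩ := exists_isComponentOf (G := G) (hLC hl)
  have hLM : L ⊆ M := hM.subset_of_connected hL hLC ⟨l, hl, hlM⟩
  have hMK : Touches G M K := (hM.touches_of_sdiff hC.connected_compl (by
    rw [Set.inter_eq_right.mpr (Set.subset_compl_iff_disjoint_right.mpr hKC)]
    exact nonempty_of_connected_induce hK)).mono subset_rfl Set.inter_subset_right
  have hMC : Disjoint M C := Set.disjoint_left.mpr fun v hv => (hM.subset hv).1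
  have hTheta := isTheta_of_isArc hC.toIsInducedCycle hw hz hne hA hB hAB hK hKC hKw hKz
  refine hTheta.not_isPlanar_of_hub hM.connected (fun h => (hM.subset h).1 hw)
    (fun h => (hM.subset h).1 hz) ?_ ?_
  all_goals simp only [Fin.forall_fin_succ, IsEmpty.forall_iff, and_true, Matrix.cons_val_zero,
    Matrix.cons_val_succ]
  · exact ⟨hMC.mono_right (hA.subset.trans Set.sdiff_subset),
      hMC.mono_right (hB.subset.trans Set.sdiff_subset),
      Set.disjoint_left.mpr fun v hv => (hM.subset hv).2⟩
  · exact ⟨hLA.mono hLM subset_rfl, hLB.mono hLM subset_rfl, hMK⟩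

theorem not_isPlanar_of_crossing (hC : IsPeripheral G C) (hC' : IsInducedCycle G C')
    (hw : w ∈ C) (hz : z ∈ C) (hzC' : z ∉ C') (hne : w ≠ z) (hwz : ¬ G.Adj w z)
    (hmeet : ∀ D, IsArc G C w z D → (D ∩ C').Nonempty) (hK : (G.induce K).Connected)
    (hKC : Disjoint K C) (hKC' : Disjoint K C') (hKw : Touches G K {w}) (hKz : Touches G K {z}) :
    ¬ G.IsPlanar := by
  obtain ⟨A, B, hA, hB, hAB, hunion⟩ := hC.exists_isArc_isArc hw hz hne hwz
  have hS : (G.induce (C' \ {w})).Connected := by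
    by_cases hwC' : w ∈ C'
    · exact hC'.connected_sdiff_singleton hwC'
    · rw [Set.sdiff_singleton_eq_self hwC']
      exact hC'.connected
  have arc_subset {D : Set V} (hD : IsArc G C w z D) : D ∩ C' ⊆ C' \ {w} :=
    fun v hv => ⟨hv.2, fun h => (hD.subset hv.1).2 (Or.inl h)⟩
  obtain ⟨L, hL, hLA, hLB⟩ := exists_isComponentOf_touches_touches hS (hmeet A hA) (hmeet B hB)
    (arc_subset hA) (arc_subset hB) (hAB.mono Set.inter_subset_left Set.inter_subset_left)
    fun h => hA.not_touches hB.subset hAB (h.mono Set.inter_subset_left Set.inter_subset_left)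
  have hLC' : L ⊆ C' := fun v hv => (hL.subset hv).1.1
  have hLC : L ⊆ Cᶜ \ K := fun v hv => by
    refine ⟨fun hvC => ?_, fun hvK => Set.disjoint_left.mp hKC' hvK (hLC' hv)⟩
    have hvw : v ≠ w := (hL.subset hv).1.2
    have hvz : v ≠ z := fun h => hzC' (h ▸ hLC' hv)
    rcases hunion.ge (show v ∈ C \ {w, z} from ⟨hvC, by simp [hvw, hvz]⟩) with hvA | hvB
    exacts [(hL.subset hv).2 (.inl ⟨hvA, hLC' hv⟩), (hL.subset hv).2 (.inr ⟨hvB, hLC' hv⟩)]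
  exact not_isPlanar_of_isArc_touches hC hw hz hne hA hB hAB hK hKC hKw hKz hL.connected hLC
    (hLA.mono subset_rfl Set.inter_subset_left) (hLB.mono subset_rfl Set.inter_subset_left)

theorem not_isPlanar_of_isArc_sdiff_nonempty (hC : IsPeripheral G C) (hC' : IsPeripheral G C')
    (hx : x ∈ C ∩ C') (hy : y ∈ C ∩ C') (hA : IsArc G C x y A) (hB : IsArc G C x y B)
    (hAB : Disjoint A B) (hunion : A ∪ B = C \ {x, y}) (hAC' : (A \ C').Nonempty)
    (hBC' : (B \ C').Nonempty) : ¬ G.IsPlanar := by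
  have hno : ¬ Touches G A B := hA.not_touches hB.subset hAB
  obtain ⟨K, hK, ⟨k, hk, w, hw, hkw⟩, l, hl, z, hz, hlz⟩ :=
    exists_isComponentOf_touches_touches hC'.connected_compl hAC' hBC' (fun _ h => h.2)
      (fun _ h => h.2) (hAB.mono Set.sdiff_subset Set.sdiff_subset)
      fun h => hno (h.mono Set.sdiff_subset Set.sdiff_subset)
  have hKC' : Disjoint K C' := Set.disjoint_left.mpr fun u hu => (hK.subset hu).1
  have hKC : Disjoint K C := Set.disjoint_left.mpr fun u hu huC => by
    have huC' := Set.disjoint_left.mp hKC' hu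
    have huxy : u ∉ ({x, y} : Set V) := by rintro (rfl | rfl); exacts [huC' hx.2, huC' hy.2]
    rcases hunion.ge ⟨huC, huxy⟩ with h | h
    exacts [(hK.subset hu).2 (.inl ⟨h, huC'⟩), (hK.subset hu).2 (.inr ⟨h, huC'⟩)]
  refine not_isPlanar_of_crossing hC hC'.toIsInducedCycle (hA.subset hw.1).1 (hB.subset hz.1).1
    hz.2 (hAB.ne_of_mem hw.1 hz.1) (fun h => hno ⟨w, hw.1, z, hz.1, h⟩)
    (fun D hD => ?_) hK.connected hKC hKC' ⟨k, hk, w, rfl, hkw⟩ ⟨l, hl, z, rfl, hlz⟩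
  rcases hA.mem_or_mem_of_interlaced hC.toIsInducedCycle hB hAB hw.1 hz.1 hD with h | h
  exacts [⟨x, h, hx.2⟩, ⟨y, h, hy.2⟩]

theorem isTheta_of_isInducedCycle {C : Fin 3 → Set V} (hC : ∀ i, IsInducedCycle G (C i))
    (hxy : G.Adj x y) (hx : ∀ i, x ∈ C i) (hy : ∀ i, y ∈ C i)
    (hinter : Pairwise fun i j => C i ∩ C j = {x, y}) :
    IsTheta G x y fun i => C i \ {x, y} :=
  have hArc i : IsArc G (C i) x y (C i \ {x, y}) :=
    (hC i).isArc_sdiff_pair_of_adj (hx i) (hy i) hxy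
  { ne := hxy.ne
    connected := fun i => (hArc i).connected
    disjoint := fun _ _ hij => Set.disjoint_left.mpr fun _ hi hj => hi.2 (hinter hij ▸ ⟨hi.1, hj.1⟩)
    left_notMem := fun _ h => h.2 (.inl rfl)
    right_notMem := fun _ h => h.2 (.inr rfl)
    touches_left := fun i => ((hArc i).touches_left (hC i) (hx i) (hy i) hxy.ne).symm
    touches_right := fun i => ((hArc i).touches_right (hC i) (hx i) (hy i) hxy.ne).symm }

theorem not_isPlanar_of_three_isPeripheral {C : Fin 3 → Set V} (hC : ∀ i, IsPeripheral G (C i))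
    (hxy : G.Adj x y) (hx : ∀ i, x ∈ C i) (hy : ∀ i, y ∈ C i)
    (hinter : Pairwise fun i j => C i ∩ C j = {x, y}) : ¬ G.IsPlanar := by
  have hP := isTheta_of_isInducedCycle (fun i => (hC i).toIsInducedCycle) hxy hx hy hinter
  have subset_compl {i j : Fin 3} (hij : i ≠ j) : C i \ {x, y} ⊆ (C j)ᶜ :=
    fun v hv hvj => hv.2 (hinter hij ▸ ⟨hv.1, hvj⟩)
  have hM (i : Fin 3) :
      (C (i + 2))ᶜ \ (C i \ {x, y} ∪ C (i + 1) \ {x, y}) = (⋃ i, C i)ᶜ := by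
    ext v
    have hcases : (∀ j, v ∉ C j) ↔ v ∉ C i ∧ v ∉ C (i + 1) ∧ v ∉ C (i + 2) := by
      clear * -
      revert i
      simp [Fin.forall_fin_succ]
      grind
    have := hx (i + 2)
    have := hy (i + 2)
    simp only [Set.mem_sdiff, Set.mem_compl_iff, Set.mem_union, Set.mem_iUnion, not_exists, hcases]
    grind
  choose L hLM hconn htouch hL using fun i => exists_link (hC (i + 2)).connected_compl
    (hP.connected i) (hP.connected (i + 1)) (hP.disjoint (by simp)) (subset_compl (by simp))
    (subset_compl (by simp)) (hM i)
  exact hP.not_isPlanar_of_links hxy (Set.notMem_compl_iff.mpr (Set.mem_iUnion_of_mem 0 (hx 0)))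
    (Set.notMem_compl_iff.mpr (Set.mem_iUnion_of_mem 0 (hy 0)))
    (fun i => Set.disjoint_compl_right_iff_subset.mpr
      (Set.sdiff_subset.trans (Set.subset_iUnion C i)))
    hLM hconn htouch hL

end Finite

namespace IsThreeConnected

variable [Fintype V]

theorem exists_adj_mem_notMem (hG : IsThreeConnected G) (hP : G.IsPlanar)
    (hC : IsPeripheral G C) (hC' : IsPeripheral G C') (hne : C ≠ C') (hs : s ∈ C) (hs' : s ∈ C') :
    ∃ u ∈ C, G.Adj s u ∧ u ∉ C' := by
  by_contra! hN
  obtain ⟨r, hsr, hr⟩ : ∃ r ∈ G.neighborSet s, r ∉ G.neighborSet s ∩ C' :=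
    Set.exists_mem_notMem_of_ncard_lt_ncard (by
      rw [hC'.ncard_neighborSet_inter s hs']
      exact hG.three_le_ncard_neighborSet s)
  have hrC' : r ∉ C' := fun h => hr ⟨hsr, h⟩
  have hS : (G.induce ({s} ∪ C'ᶜ)).Connected := Touches.connected_union
    (connected_induce_singleton s) hC'.connected_compl ⟨s, rfl, r, hrC', hsr⟩
  have hQ : (C \ C').Nonempty := Set.sdiff_nonempty.mpr fun h =>
    hne (hC.eq_of_subset hC'.toIsInducedCycle h)
  have hno : ¬ Touches G {s} (C \ C') := fun ⟨_, h, u, hu, hsu⟩ =>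
    hu.2 (hN u hu.1 (h ▸ hsu))
  obtain ⟨K, hK, hKs, k, hk, z, hz, hkz⟩ := exists_isComponentOf_touches_touches hS
    (Set.singleton_nonempty s) hQ Set.subset_union_left (fun _ h => Or.inr h.2)
    (Set.disjoint_singleton_left.mpr fun h => h.2 hs') hno
  have hKC' : Disjoint K C' := Set.disjoint_left.mpr fun v hv =>
    (hK.subset hv).1.resolve_left fun h => (hK.subset hv).2 (.inl h)
  have hKC : Disjoint K C := Set.disjoint_left.mpr fun v hv hvC =>
    (hK.subset hv).2 (.inr ⟨hvC, Set.disjoint_left.mp hKC' hv⟩)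
  have hsz : s ≠ z := fun h => hz.2 (h ▸ hs')
  refine not_isPlanar_of_crossing hC hC'.toIsInducedCycle hs hz.1 hz.2 hsz
    (fun h => hno ⟨s, rfl, z, hz, h⟩) (fun D hD => ?_) hK.connected hKC hKC' hKs
    ⟨k, hk, z, rfl, hkz⟩ hP
  obtain ⟨d, hd, hds⟩ := touches_singleton_right.mp
    (hD.touches_left hC.toIsInducedCycle hs hz.1 hsz)
  exact ⟨d, hd, hN d (hD.subset hd).1 hds.symm⟩

theorem inter_eq_pair (hG : IsThreeConnected G) (hP : G.IsPlanar)
    (hC : IsPeripheral G C) (hC' : IsPeripheral G C') (hne : C ≠ C') (hxy : G.Adj x y)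
    (hx : x ∈ C) (hx' : x ∈ C') (hy : y ∈ C) (hy' : y ∈ C') : C ∩ C' = {x, y} := by
  refine Set.Subset.antisymm (fun v ⟨hv, hv'⟩ => ?_) ?_
  swap
  · exact Set.pair_subset ⟨hx, hx'⟩ ⟨hy, hy'⟩
  by_contra hvxy
  simp only [Set.mem_insert_iff, Set.mem_singleton_iff, not_or] at hvxy
  obtain ⟨p, hp, hxp, hpC'⟩ := hG.exists_adj_mem_notMem hP hC hC' hne hx hx'
  obtain ⟨q, hq, hyq, hqC'⟩ := hG.exists_adj_mem_notMem hP hC hC' hne hy hy'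
  have ne_of_notMem {a b : V} (ha : a ∈ C') (hb : b ∉ C') : b ≠ a := fun h => hb (h ▸ ha)
  have eq_or_eq {u : V} (hu : u ∈ C) (hxu : G.Adj x u) : u = y ∨ u = p :=
    hC.eq_or_eq_of_adj hx hy hxy hp hxp (ne_of_notMem hy' hpC').symm hu hxu
  have hxv : ¬ G.Adj x v := fun h =>
    (eq_or_eq hv h).elim hvxy.2 (ne_of_notMem hv' hpC').symm
  obtain ⟨A, B, hA, hB, hAB, hunion, hyA⟩ := hC.exists_isArc_isArc_mem hx hv (Ne.symm hvxy.1) hxv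
    (x := y) ⟨hy, by simp [hxy.ne', Ne.symm hvxy.2]⟩
  have hqA : q ∈ A := hA.mem_of_adj y hyA q
    ⟨hq, by simp [ne_of_notMem hx' hqC', ne_of_notMem hv' hqC']⟩ hyq
  obtain ⟨b, hb, hbx⟩ := touches_singleton_right.mp
    (hB.touches_left hC.toIsInducedCycle hx hv (Ne.symm hvxy.1))
  have hbC' : b ∉ C' := by
    rcases eq_or_eq (hB.subset hb).1 hbx.symm with rfl | rfl
    exacts [(Set.disjoint_left.mp hAB hyA hb).elim, hpC']
  exact not_isPlanar_of_isArc_sdiff_nonempty hC hC' ⟨hx, hx'⟩ ⟨hv, hv'⟩ hA hB hAB hunion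
    ⟨q, hqA, hqC'⟩ ⟨b, hb, hbC'⟩ hP

theorem ncard_setOf_isPeripheral (hG : IsThreeConnected G) (hP : G.IsPlanar) (hxy : G.Adj x y) :
    {C | IsPeripheral G C ∧ x ∈ C ∧ y ∈ C}.ncard = 2 := by
  refine le_antisymm ?_ ?_
  · by_contra! hlt
    obtain ⟨C₀, C₁, C₂, h₀, h₁, h₂, h₀₁, h₀₂, h₁₂⟩ := (Set.two_lt_ncard_iff).mp hlt
    have hC : ∀ i, IsPeripheral G (![C₀, C₁, C₂] i) ∧ x ∈ ![C₀, C₁, C₂] i ∧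
        y ∈ ![C₀, C₁, C₂] i := Fin.cases h₀ (Fin.cases h₁ (Fin.cases h₂ fun i => i.elim0))
    have hne : Pairwise fun i j => ![C₀, C₁, C₂] i ≠ ![C₀, C₁, C₂] j :=
      pairwise_vecCons (r := (· ≠ ·)) (Fin.forall_fin_two.mpr ⟨h₀₁, h₀₂⟩)
        (pairwise_vecCons (Fin.forall_fin_one.mpr h₁₂) Subsingleton.pairwise)
    exact not_isPlanar_of_three_isPeripheral (fun i => (hC i).1) hxy (fun i => (hC i).2.1)
      (fun i => (hC i).2.2) (fun i j hij => hG.inter_eq_pair hP (hC i).1 (hC j).1 (hne hij) hxy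
        (hC i).2.1 (hC j).2.1 (hC i).2.2 (hC j).2.2) hP
  · obtain ⟨v, -, hv⟩ : ∃ v ∈ G.neighborSet x, v ∉ ({x, y} : Set V) :=
      Set.exists_mem_notMem_of_ncard_lt_ncard
        ((ncard_pair_le_two x y).trans_lt (hG.three_le_ncard_neighborSet x))
    simp only [Set.mem_insert_iff, Set.mem_singleton_iff, not_or] at hv
    obtain ⟨C, hC, hx, hy, -⟩ := hG.exists_isPeripheral_notMem hxy hv.1 hv.2
    obtain ⟨z, hz, hyz, hzx⟩ := hC.exists_adj_ne hy x
    obtain ⟨C', hC', hx', hy', hzC'⟩ := hG.exists_isPeripheral_notMem hxy hzx hyz.ne'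
    exact (Set.one_lt_ncard_iff).mpr ⟨C, C', ⟨hC, hx, hy⟩, ⟨hC', hx', hy'⟩,
      fun h => hzC' (h ▸ hz)⟩

open Classical in
theorem isFacialCover (hG : IsThreeConnected G) (hP : G.IsPlanar) :
    IsFacialCover G fun C : {C // IsPeripheral G C} => edgeIndicator G C := by
  refine isFacialCover_of_card_eq_two
    (fun C => cycleSpace_mono (Set.subset_univ _) C.2.edgeIndicator_mem) ?_ ?_
  · refine hG.cycleSpace_le_peripheralSpan.trans (Submodule.span_mono ?_)
    rintro _ ⟨C, ⟨hC, -⟩, rfl⟩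
    exact ⟨⟨C, hC⟩, rfl⟩
  · intro e he
    induction e with
    | h x y =>
      refine Eq.trans ?_ (hG.ncard_setOf_isPeripheral hP he)
      rw [← Set.ncard_coe_finset,
        ← Set.ncard_image_of_injective _ Subtype.val_injective]
      congr 1
      ext C
      simp [edgeIndicator_ne_zero_iff, G.mem_edgeSet.mp he, and_comm, and_left_comm]

theorem girth_mul_card_edgeSet_le (hG : IsThreeConnected G) (hP : G.IsPlanar) :
    G.girth * (G.edgeSet.ncard + 2) ≤ 2 * G.edgeSet.ncard + G.girth * Fintype.card V := by
  classical
  exact (hG.isFacialCover hP).girth_mul_card_edgeSet_le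

end IsThreeConnected

end FacialCycles

section SmallSeparations

variable {V : Type*} {G : SimpleGraph V} {A B S : Set V} {a : V} {k : ℕ}

theorem ncard_insert_neighborSet [Finite V] (a : V) :
    (insert a (G.neighborSet a)).ncard = G.degN a + 1 :=
  Set.ncard_insert_of_notMem G.irrefl

theorem mul_le_ncard_biUnion {ι : Type*} {s : Set ι} {f : ι → Set V} [Finite ι] [Finite V]
    (hdisj : s.PairwiseDisjoint f) (hk : ∀ i ∈ s, k ≤ (f i).ncard) :
    s.ncard * k ≤ (⋃ i ∈ s, f i).ncard := by
  rw [s.toFinite.ncard_biUnion (fun i _ => (f i).toFinite) hdisj,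
    finsum_mem_eq_finite_toFinset_sum _ s.toFinite, Set.ncard_eq_toFinset_card s]
  exact Finset.card_nsmul_le_sum _ _ _ fun i hi => hk i (s.toFinite.mem_toFinset.mp hi)

theorem ncard_biUnion_le_mul {ι : Type*} {s : Set ι} {f : ι → Set V} [Finite ι]
    (hk : ∀ i ∈ s, (f i).ncard ≤ k) : (⋃ i ∈ s, f i).ncard ≤ s.ncard * k := by
  rw [Set.ncard_eq_toFinset_card s]
  have := Finset.set_ncard_biUnion_le s.toFinite.toFinset f
  simp only [Set.Finite.mem_toFinset] at this
  exact this.trans (Finset.sum_le_card_nsmul _ _ _ fun i hi => hk i (s.toFinite.mem_toFinset.mp hi))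

/-- The ball of radius two around `a`, as a union over the neighbours `b` of `a` of pieces that are
pairwise disjoint when the girth is at least five. -/
def ballTwo (G : SimpleGraph V) (a : V) : Set V :=
  insert a (⋃ b ∈ G.neighborSet a, insert b (G.neighborSet b \ {a}))

theorem mul_self_lt_ncard_ballTwo [Finite V] (hk : ∀ v, k ≤ G.degN v) (hgirth : 5 ≤ G.girth)
    (a : V) : k * k < (ballTwo G a).ncard := by
  have ha : a ∉ ⋃ b ∈ G.neighborSet a, insert b (G.neighborSet b \ {a}) := by
    simp only [Set.mem_iUnion₂, not_exists]
    rintro b hab (rfl | ⟨-, ha⟩)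
    exacts [G.irrefl hab, ha rfl]
  have hcard : ∀ b ∈ G.neighborSet a, k ≤ (insert b (G.neighborSet b \ {a})).ncard := by
    intro b hab
    rw [Set.ncard_insert_of_notMem fun hb => G.irrefl hb.1,
      Set.ncard_sdiff_singleton_add_one (s := G.neighborSet b) hab.symm]
    exact hk b
  have hdisj : (G.neighborSet a).PairwiseDisjoint fun b => insert b (G.neighborSet b \ {a}) := by
    intro b hab c hac hbc
    have htri := @not_adj_of_four_le_girth _ G
    refine Set.disjoint_left.mpr ?_
    rintro d (rfl | hbd) (rfl | hcd)
    · exact hbc rfl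
    · exact htri (by lia) hac hcd.1 hab.symm
    · exact htri (by lia) hab hbd.1 hac.symm
    · exact hbc (eq_of_five_le_girth hgirth hab hbd.1 hac hcd.1 fun had => hbd.2 had.symm)
  rw [ballTwo, Set.ncard_insert_of_notMem ha]
  exact Nat.lt_succ_of_le ((Nat.mul_le_mul_right k (hk a)).trans (mul_le_ncard_biUnion hdisj hcard))

/-- A separation of `G` with separator `S`: both sides `A` and `B` are nonempty. -/
structure IsSeparation (G : SimpleGraph V) (A B S : Set V) : Prop where
  nonempty_left : A.Nonempty
  nonempty_right : B.Nonempty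
  disjoint : Disjoint A B
  union_eq : A ∪ B = Sᶜ
  not_touches : ¬ Touches G A B

theorem exists_isSeparation (hS : ¬ (G.induce Sᶜ).Connected) (hne : Sᶜ.Nonempty) :
    ∃ A B, IsSeparation G A B S := by
  obtain ⟨p, hp⟩ := hne
  obtain ⟨A, hA, hpA⟩ := exists_isComponentOf (G := G) hp
  refine ⟨A, Sᶜ \ A, ⟨p, hpA⟩, ?_, Set.disjoint_sdiff_right, Set.union_sdiff_cancel hA.subset,
    hA.not_touches Set.sdiff_subset Set.disjoint_sdiff_right⟩
  by_contra! hempty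
  exact hS (hA.subset.antisymm (Set.sdiff_eq_empty.mp hempty) ▸ hA.connected)

namespace IsSeparation

theorem symm (h : IsSeparation G A B S) : IsSeparation G B A S :=
  ⟨h.nonempty_right, h.nonempty_left, h.disjoint.symm, Set.union_comm A B ▸ h.union_eq,
    fun hBA => h.not_touches hBA.symm⟩

theorem neighborSet_subset (h : IsSeparation G A B S) (ha : a ∈ A) : G.neighborSet a ⊆ A ∪ S := by
  intro b hab
  by_contra! hb
  simp only [Set.mem_union, not_or] at hb
  exact h.not_touches ⟨a, ha, b, (h.union_eq.ge hb.2).resolve_left hb.1, hab⟩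

theorem insert_neighborSet_subset (h : IsSeparation G A B S) (ha : a ∈ A) :
    insert a (G.neighborSet a) ⊆ A ∪ S :=
  Set.insert_subset (Or.inl ha) (h.neighborSet_subset ha)

theorem ballTwo_subset (h : IsSeparation G A B S) (ha : a ∈ A) (haS : ∀ s ∈ S, ¬ G.Adj a s) :
    ballTwo G a ⊆ A ∪ S :=
  Set.insert_subset (Or.inl ha) <| Set.iUnion₂_subset fun b hab =>
    have hb : b ∈ A := (h.neighborSet_subset ha hab).resolve_right fun hbS => haS b hbS hab
    Set.insert_subset (Or.inl hb) (Set.sdiff_subset.trans (h.neighborSet_subset hb))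

theorem disjoint_separator (h : IsSeparation G A B S) : Disjoint A S :=
  Set.disjoint_left.mpr fun _ ha => h.union_eq.le (Or.inl ha)

variable [Finite V]

theorem ncard_union_eq (h : IsSeparation G A B S) : (A ∪ S).ncard = A.ncard + S.ncard :=
  Set.ncard_union_eq h.disjoint_separator

theorem ncard_add_ncard_add_ncard (h : IsSeparation G A B S) :
    A.ncard + B.ncard + S.ncard = Nat.card V := by
  rw [← Set.ncard_union_eq h.disjoint, h.union_eq, add_comm, Set.ncard_add_ncard_compl]

theorem lt_ncard_union (h : IsSeparation G A B S) (hk : ∀ v, k ≤ G.degN v) :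
    k < (A ∪ S).ncard := by
  obtain ⟨a, ha⟩ := h.nonempty_left
  calc k < (insert a (G.neighborSet a)).ncard := by
        rw [ncard_insert_neighborSet]
        exact Nat.lt_succ_of_le (hk a)
    _ ≤ (A ∪ S).ncard := Set.ncard_le_ncard (h.insert_neighborSet_subset ha)

theorem exists_adj_left (h : IsSeparation G A B S) (hk : ∀ v, k ≤ G.degN v) (hS : S.ncard < k)
    (ha : a ∈ A) : ∃ b ∈ A, G.Adj a b := by
  obtain ⟨b, hab, hb⟩ : ∃ b ∈ G.neighborSet a, b ∉ S :=
    Set.exists_mem_notMem_of_ncard_lt_ncard (hS.trans_le (hk a))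
  exact ⟨b, (h.neighborSet_subset ha hab).resolve_right hb, hab⟩

theorem two_mul_le_ncard_union (h : IsSeparation G A B S) (hk : ∀ v, k ≤ G.degN v)
    (hS : S.ncard < k) (hgirth : 4 ≤ G.girth) : 2 * k ≤ (A ∪ S).ncard := by
  obtain ⟨a, ha⟩ := h.nonempty_left
  obtain ⟨b, hb, hab⟩ := h.exists_adj_left hk hS ha
  have hdisj : Disjoint (G.neighborSet a) (G.neighborSet b) := Set.disjoint_left.mpr
    fun c hac hbc => not_adj_of_four_le_girth hgirth hab hbc hac.symm
  calc 2 * k ≤ G.degN a + G.degN b := by have := hk a; have := hk b; lia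
    _ = (G.neighborSet a ∪ G.neighborSet b).ncard := (Set.ncard_union_eq hdisj).symm
    _ ≤ (A ∪ S).ncard := Set.ncard_le_ncard
      (Set.union_subset (h.neighborSet_subset ha) (h.neighborSet_subset hb))

theorem isClique_insert_left (h : IsSeparation G A B S) (hk : ∀ v, k ≤ G.degN v)
    (hAS : (A ∪ S).ncard ≤ k + 1) {x : V} (hx : x ∈ S) : G.IsClique (insert x A) := by
  have hadj {a : V} (ha : a ∈ A) {b : V} (hb : b ∈ A ∪ S) (hab : a ≠ b) : G.Adj a b := by
    have heq : insert a (G.neighborSet a) = A ∪ S := Set.eq_of_subset_of_ncard_le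
      (h.insert_neighborSet_subset ha) (by
        rw [ncard_insert_neighborSet]
        exact hAS.trans (Nat.succ_le_succ (hk a)))
    exact (heq.ge hb).resolve_left hab.symm
  rw [SimpleGraph.isClique_insert]
  exact ⟨fun a ha b hb hab => hadj ha (Or.inl hb) hab,
    fun b hb hxb => (hadj hb (Or.inr hx) hxb.symm).symm⟩

/-- A vertex of `A` all of whose neighbours are in `S` or have a neighbour in `S` would inject its
neighbourhood into `S`. -/
theorem exists_forall_not_adj (h : IsSeparation G A B S) (hk : ∀ v, k ≤ G.degN v)
    (hS : S.ncard < k) (hgirth : 5 ≤ G.girth) : ∃ a ∈ A, ∀ s ∈ S, ¬ G.Adj a s := by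
  by_contra! hA
  obtain ⟨a, ha⟩ := h.nonempty_left
  have haS : a ∉ S := h.disjoint_separator.notMem_of_mem_left ha
  have hattach (b : V) (hb : b ∈ G.neighborSet a) : ∃ s ∈ S, b = s ∨ G.Adj b s := by
    rcases h.neighborSet_subset ha hb with hbA | hbS
    · exact (hA b hbA).imp fun s hs => ⟨hs.1, Or.inr hs.2⟩
    · exact ⟨b, hbS, Or.inl rfl⟩
  choose! f hfS hf using hattach
  have hinj : Set.InjOn f (G.neighborSet a) := by
    intro b hab c hac hbc
    have hcb : c = f b ∨ G.Adj c (f b) := hbc ▸ hf c hac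
    have hafb : a ≠ f b := fun heq => haS (heq ▸ hfS b hab)
    have htri := @not_adj_of_four_le_girth _ G
    rcases hf b hab with hb | hb <;> rcases hcb with hc | hc
    · exact hb.trans hc.symm
    · exact absurd hab.symm (htri (by lia) hac (hb ▸ hc))
    · exact absurd hac.symm (htri (by lia) hab (hc ▸ hb))
    · exact eq_of_five_le_girth hgirth hab hb hac hc hafb
  exact hS.not_ge ((hk a).trans (Set.ncard_le_ncard_of_injOn f hfS hinj))

theorem mul_self_lt_ncard_union (h : IsSeparation G A B S) (hk : ∀ v, k ≤ G.degN v)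
    (hS : S.ncard < k) (hgirth : 5 ≤ G.girth) : k * k < (A ∪ S).ncard := by
  obtain ⟨a, ha, haS⟩ := h.exists_forall_not_adj hk hS hgirth
  exact (mul_self_lt_ncard_ballTwo hk hgirth a).trans_le
    (Set.ncard_le_ncard (h.ballTwo_subset ha haS))

theorem subset_of_ncard_union_le (h : IsSeparation G A B S) (hk : ∀ v, k ≤ G.degN v)
    (hgirth : 5 ≤ G.girth) (hAS : (A ∪ S).ncard ≤ k * k + 1) {x : V} (hx : x ∈ S) :
    A ⊆ (⋃ s ∈ S, G.neighborSet s ∩ A) ∪ ⋃ b ∈ G.neighborSet x ∩ A, G.neighborSet b \ {x} := by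
  intro a ha
  by_cases haS : ∀ s ∈ S, ¬ G.Adj a s
  · have hball : ballTwo G a = A ∪ S := Set.eq_of_subset_of_ncard_le (h.ballTwo_subset ha haS)
      (hAS.trans (mul_self_lt_ncard_ballTwo hk hgirth a))
    have hax : a ≠ x := h.disjoint_separator.ne_of_mem ha hx
    obtain ⟨b, hab, hxb⟩ := Set.mem_iUnion₂.mp
      ((hball.ge (Or.inr hx)).resolve_left hax.symm)
    have hbS : b ∉ S := fun hbS => haS b hbS hab
    have hbx : G.Adj b x := (hxb.resolve_left fun hxb => hbS (hxb ▸ hx)).1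
    exact Or.inr (Set.mem_biUnion
      ⟨hbx.symm, (h.neighborSet_subset ha hab).resolve_right hbS⟩ ⟨hab.symm, hax⟩)
  · push Not at haS
    obtain ⟨s, hs, has⟩ := haS
    exact Or.inl (Set.mem_biUnion hs ⟨has.symm, ha⟩)

theorem ncard_le_of_ncard_union_le {x y : V} (h : IsSeparation G A B {x, y})
    (hk : ∀ v, G.degN v = k) (hgirth : 5 ≤ G.girth) (hAS : (A ∪ {x, y}).ncard ≤ k * k + 1) :
    A.ncard ≤ (G.neighborSet x ∩ A).ncard + (G.neighborSet y ∩ A).ncard +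
      (G.neighborSet x ∩ A).ncard * (k - 1) := by
  have hsub := h.subset_of_ncard_union_le (fun v => (hk v).ge) hgirth hAS (Set.mem_insert x {y})
  rw [Set.biUnion_pair] at hsub
  have hdeg : ∀ b ∈ G.neighborSet x ∩ A, (G.neighborSet b \ {x}).ncard ≤ k - 1 := fun b hb =>
    (Set.ncard_sdiff_singleton_of_mem (s := G.neighborSet b) hb.1.symm).trans_le
      (Nat.sub_le_sub_right (hk b).le 1)
  calc A.ncard ≤ _ := Set.ncard_le_ncard hsub
    _ ≤ _ := Set.ncard_union_le _ _
    _ ≤ _ := Nat.add_le_add (Set.ncard_union_le _ _) (ncard_biUnion_le_mul hdeg)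

theorem ncard_neighborSet_inter_add_le (h : IsSeparation G A B S) (x : V) :
    (G.neighborSet x ∩ A).ncard + (G.neighborSet x ∩ B).ncard ≤ G.degN x := by
  rw [← Set.ncard_union_eq (h.disjoint.mono Set.inter_subset_right Set.inter_subset_right),
    ← Set.inter_union_distrib_left]
  exact Set.ncard_le_ncard Set.inter_subset_left

end IsSeparation

theorem not_isPlanar_of_isClique {s : Set V} (hs : G.IsClique s) (hcard : 5 ≤ s.ncard) :
    ¬ G.IsPlanar := by
  obtain ⟨t, hts, ht⟩ := Set.exists_subset_card_eq hcard
  have : Fintype t := (Set.finite_of_ncard_ne_zero (by lia)).fintype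
  obtain ⟨e⟩ : Nonempty (Fin 5 ≃ t) := ⟨(finCongr (by
    rw [← ht, Set.ncard_eq_toFinset_card', Set.toFinset_card])).trans (Fintype.equivFin t).symm⟩
  have hne {i j : Fin 5} (hij : i ≠ j) : (e i : V) ≠ e j :=
    Subtype.val_injective.ne (e.injective.ne hij)
  exact not_isPlanar_of_complete (A := fun i => {(e i : V)}) (fun i => connected_induce_singleton _)
    (fun i j hij => Set.disjoint_singleton.mpr (hne hij))
    fun i j hij => ⟨_, rfl, _, rfl, hs (hts (e i).2) (hts (e j).2) (hne hij)⟩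

theorem degN_lt_card [Fintype V] (v : V) : G.degN v < Fintype.card V := by
  rw [← Nat.card_eq_fintype_card, ← Set.ncard_univ]
  exact Set.ncard_lt_ncard (Set.ssubset_univ_iff.mpr fun h => G.irrefl (h.ge (Set.mem_univ v)))

variable [Fintype V] [Nonempty V]

theorem isThreeConnected_of_forall_not_isSeparation (hk : ∀ v, 3 ≤ G.degN v)
    (h : ∀ A B S, IsSeparation G A B S → ¬ S.ncard ≤ 2) : IsThreeConnected G := by
  have hcard : 3 < Fintype.card V := (hk (Classical.arbitrary V)).trans_lt (degN_lt_card _)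
  refine ⟨hcard, fun S hS => ?_⟩
  by_contra hconn
  have hne : Sᶜ.Nonempty := by
    have := Set.ncard_add_ncard_compl S
    rw [Nat.card_eq_fintype_card] at this
    exact Set.nonempty_of_ncard_ne_zero (by lia)
  obtain ⟨A, B, hsep⟩ := exists_isSeparation hconn hne
  exact h A B S hsep (Nat.le_of_lt_succ hS)

theorem isThreeConnected_of_card_lt (hk : ∀ v, k ≤ G.degN v) (h3 : 3 ≤ k)
    (hcard : Fintype.card V < 2 * k) : IsThreeConnected G := by
  refine isThreeConnected_of_forall_not_isSeparation (fun v => h3.trans (hk v))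
    fun A B S h hS => ?_
  have hA := h.lt_ncard_union hk
  have hB := h.symm.lt_ncard_union hk
  have := h.ncard_add_ncard_add_ncard
  rw [Nat.card_eq_fintype_card] at this
  rw [h.ncard_union_eq] at hA
  rw [h.symm.ncard_union_eq] at hB
  lia

theorem isThreeConnected_of_card_le (hP : G.IsPlanar) (hk : ∀ v, k ≤ G.degN v) (h5 : 5 ≤ k)
    (hcard : Fintype.card V ≤ 2 * k) : IsThreeConnected G := by
  refine isThreeConnected_of_forall_not_isSeparation (fun v => (by lia : 3 ≤ k).trans (hk v))
    fun A B S h hS => ?_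
  have hA := h.lt_ncard_union hk
  have hB := h.symm.lt_ncard_union hk
  have hsum := h.ncard_add_ncard_add_ncard
  rw [Nat.card_eq_fintype_card] at hsum
  rw [h.ncard_union_eq] at hA
  rw [h.symm.ncard_union_eq] at hB
  obtain ⟨x, hx⟩ : S.Nonempty := Set.nonempty_of_ncard_ne_zero (by lia)
  have hxA : x ∉ A := fun hxA => Set.disjoint_left.mp h.disjoint_separator hxA hx
  have hAS : (A ∪ S).ncard ≤ k + 1 := h.ncard_union_eq.trans_le (by lia)
  refine not_isPlanar_of_isClique (h.isClique_insert_left hk hAS hx) ?_ hP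
  rw [Set.ncard_insert_of_notMem hxA]
  lia

theorem isThreeConnected_of_four_le_girth (hk : ∀ v, k ≤ G.degN v) (h3 : 3 ≤ k)
    (hgirth : 4 ≤ G.girth) (hcard : Fintype.card V + 2 < 4 * k) : IsThreeConnected G := by
  refine isThreeConnected_of_forall_not_isSeparation (fun v => h3.trans (hk v))
    fun A B S h hS => ?_
  have hA := h.two_mul_le_ncard_union hk (by lia) hgirth
  have hB := h.symm.two_mul_le_ncard_union hk (by lia) hgirth
  have := h.ncard_add_ncard_add_ncard
  rw [Nat.card_eq_fintype_card] at this
  rw [h.ncard_union_eq] at hA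
  rw [h.symm.ncard_union_eq] at hB
  lia

theorem isThreeConnected_of_five_le_girth (hk : ∀ v, G.degN v = 3) (hgirth : 5 ≤ G.girth)
    (hcard : Fintype.card V ≤ 18) : IsThreeConnected G := by
  refine isThreeConnected_of_forall_not_isSeparation (fun v => (hk v).ge) fun A B S h hS => ?_
  have hk' (v : V) : 3 ≤ G.degN v := (hk v).ge
  have hA := h.mul_self_lt_ncard_union hk' (by lia) hgirth
  have hB := h.symm.mul_self_lt_ncard_union hk' (by lia) hgirth
  have hsum := h.ncard_add_ncard_add_ncard
  rw [Nat.card_eq_fintype_card] at hsum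
  rw [h.ncard_union_eq] at hA
  rw [h.symm.ncard_union_eq] at hB
  obtain ⟨x, y, -, rfl⟩ := Set.ncard_eq_two.mp (by lia : S.ncard = 2)
  have hAxy := h.ncard_le_of_ncard_union_le hk hgirth (h.ncard_union_eq.trans_le (by lia))
  have hBxy := h.symm.ncard_le_of_ncard_union_le hk hgirth (h.symm.ncard_union_eq.trans_le (by lia))
  have hx := h.ncard_neighborSet_inter_add_le x
  have hy := h.ncard_neighborSet_inter_add_le y
  rw [hk] at hx hy
  lia

end SmallSeparations

section LowerBounds

variable {n : ℕ}

theorem nonempty_of_girth_ne_zero {V : Type*} {G : SimpleGraph V} (h : G.girth ≠ 0) :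
    Nonempty V := by
  by_contra hV
  rw [not_nonempty_iff] at hV
  exact h (girth_eq_zero.mpr fun v => isEmptyElim v)

theorem four_le_of_mem_regOrders (hn : n ∈ regOrders 3 3) : 4 ≤ n := by
  obtain ⟨V, _, G, -, hk, hg, rfl⟩ := hn
  obtain ⟨v⟩ := nonempty_of_girth_ne_zero (G := G) (by lia)
  exact (hk v).symm.trans_lt (degN_lt_card v)

theorem eight_le_of_mem_regOrders (hn : n ∈ regOrders 3 4) : 8 ≤ n := by
  obtain ⟨V, _, G, hP, hk, hg, rfl⟩ := hn
  by_contra! hcard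
  have : Nonempty V := nonempty_of_girth_ne_zero (G := G) (by lia)
  have hG := isThreeConnected_of_four_le_girth (fun v => (hk v).ge) le_rfl hg.ge (by lia)
  have hfaces := hG.girth_mul_card_edgeSet_le hP
  have hedges := two_mul_card_edgeSet G hk
  rw [hg] at hfaces
  lia

theorem twenty_le_of_mem_regOrders (hn : n ∈ regOrders 3 5) : 20 ≤ n := by
  obtain ⟨V, _, G, hP, hk, hg, rfl⟩ := hn
  by_contra! hcard
  have : Nonempty V := nonempty_of_girth_ne_zero (G := G) (by lia)
  have hedges := two_mul_card_edgeSet G hk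
  have hG := isThreeConnected_of_five_le_girth hk hg.ge (by lia)
  have hfaces := hG.girth_mul_card_edgeSet_le hP
  rw [hg] at hfaces
  lia

theorem six_le_of_mem_regOrders (hn : n ∈ regOrders 4 3) : 6 ≤ n := by
  obtain ⟨V, _, G, hP, hk, hg, rfl⟩ := hn
  by_contra! hcard
  have : Nonempty V := nonempty_of_girth_ne_zero (G := G) (by lia)
  have hG := isThreeConnected_of_card_lt (fun v => (hk v).ge) (by lia) (by lia)
  have hfaces := hG.girth_mul_card_edgeSet_le hP
  have hedges := two_mul_card_edgeSet G hk
  rw [hg] at hfaces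
  lia

theorem twelve_le_of_mem_regOrders (hn : n ∈ regOrders 5 3) : 12 ≤ n := by
  obtain ⟨V, _, G, hP, hk, hg, rfl⟩ := hn
  by_contra! hcard
  have : Nonempty V := nonempty_of_girth_ne_zero (G := G) (by lia)
  have hedges := two_mul_card_edgeSet G hk
  have hG := isThreeConnected_of_card_le hP (fun v => (hk v).ge) le_rfl (by lia)
  have hfaces := hG.girth_mul_card_edgeSet_le hP
  rw [hg] at hfaces
  lia

end LowerBounds

/-- The minimum order of a finite planar `k`-regular graph of girth `g`
is `4, 8, 20, 6, 12` for `(k,g) = (3,3), (3,4), (3,5), (4,3), (5,3)` respectively,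
attained by the tetrahedron, the cube, the dodecahedron, the octahedron and the
icosahedron. -/
theorem planar_regular_cages :
    (IsLeast (regOrders 3 3) 4 ∧ IsLeast (regOrders 3 4) 8 ∧ IsLeast (regOrders 3 5) 20 ∧
      IsLeast (regOrders 4 3) 6 ∧ IsLeast (regOrders 5 3) 12) ∧
    (tetrahedron.IsPlanar ∧ (∀ v, tetrahedron.degN v = 3) ∧ tetrahedron.girth = 3 ∧
      Fintype.card (Fin 4) = 4) ∧
    (cubeGraph.IsPlanar ∧ (∀ v, cubeGraph.degN v = 3) ∧ cubeGraph.girth = 4 ∧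
      Fintype.card (Fin 8) = 8) ∧
    (dodecahedron.IsPlanar ∧ (∀ v, dodecahedron.degN v = 3) ∧ dodecahedron.girth = 5 ∧
      Fintype.card (Fin 20) = 20) ∧
    (octahedron.IsPlanar ∧ (∀ v, octahedron.degN v = 4) ∧ octahedron.girth = 3 ∧
      Fintype.card (Fin 6) = 6) ∧
    (icosahedron.IsPlanar ∧ (∀ v, icosahedron.degN v = 5) ∧ icosahedron.girth = 3 ∧
      Fintype.card (Fin 12) = 12) := by
  refine ⟨⟨⟨?_, fun n => four_le_of_mem_regOrders⟩, ⟨?_, fun n => eight_le_of_mem_regOrders⟩,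
      ⟨?_, fun n => twenty_le_of_mem_regOrders⟩, ⟨?_, fun n => six_le_of_mem_regOrders⟩,
      ⟨?_, fun n => twelve_le_of_mem_regOrders⟩⟩,
    ⟨tetrahedron_isPlanar, tetrahedron_degN, tetrahedron_girth, rfl⟩,
    ⟨cubeGraph_isPlanar, cubeGraph_degN, cubeGraph_girth, rfl⟩,
    ⟨dodecahedron_isPlanar, dodecahedron_degN, dodecahedron_girth, rfl⟩,
    ⟨octahedron_isPlanar, octahedron_degN, octahedron_girth, rfl⟩,
    ⟨icosahedron_isPlanar, icosahedron_degN, icosahedron_girth, rfl⟩⟩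
  · exact ⟨_, _, _, tetrahedron_isPlanar, tetrahedron_degN, tetrahedron_girth, rfl⟩
  · exact ⟨_, _, _, cubeGraph_isPlanar, cubeGraph_degN, cubeGraph_girth, rfl⟩
  · exact ⟨_, _, _, dodecahedron_isPlanar, dodecahedron_degN, dodecahedron_girth, rfl⟩
  · exact ⟨_, _, _, octahedron_isPlanar, octahedron_degN, octahedron_girth, rfl⟩
  · exact ⟨_, _, _, icosahedron_isPlanar, icosahedron_degN, icosahedron_girth, rfl⟩
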